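/- arXiv:2210.05995 — 9 statements merged into one kernel-verified Lean document; each statement's English description precedes it below -/
import Mathlib

section
/- Suppose f satisfies Assumptions 1 (each f_i is L-smooth), 3 (primal function well-defined) and 4 (y-side μ₂-PL); let κ₂ := L/μ₂ and λ > 0. For any epoch k of mini-batch simSGDA-RR (for any realized permutation σ_k), with epoch aggregates g^k, h^k defined so that x₀^{k+1} = x₀^k − qα g^k and y₀^{k+1} = y₀^k + qβ h^k, the following deterministic inequality holds: V_λ(z₀^{k+1}) − V_λ(z₀^k) ≤ −((λ+1)/2)qα‖∇Φ(x₀^k)‖² + (λ+1)qα‖∇Φ(x₀^k) − ∇₁f(z₀^k)‖² + (qα/2)‖∇₁f(z₀^k)‖² − (qβ/2)‖∇₂f(z₀^k)‖² + (λ + 1/2)qα‖g^k − ∇₁f(z₀^k)‖² + (qβ/2)‖h^k − ∇₂f(z₀^k)‖² − [λ − ((λ+1)(κ₂+1)+1)Lqα]·(qα/2)‖g^k‖² − (1 − Lqβ)·(qβ/2)‖h^k‖². -/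
/-- Mini-batch average of (partial) gradients over the `t`-th batch (0-indexed) induced by a
permutation `σ` with batch size `b`. -/
noncomputable def batchAvg {n : ℕ} {E F V : Type*} [AddCommGroup V] [Module ℝ V] (b : ℕ)
    (g : Fin n → E → F → V) (σ : Equiv.Perm (Fin n)) (t : ℕ) (x : E) (y : F) : V :=
  (b : ℝ)⁻¹ •
    ∑ j ∈ Finset.univ.filter (fun j : Fin n => b * t ≤ (j : ℕ) ∧ (j : ℕ) < b * (t + 1)),
      g (σ j) x y

/-- `t` steps of one epoch of mini-batch simultaneous SGDA with permutation `σ`. -/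
noncomputable def simEpoch {n : ℕ} {E F : Type*} [AddCommGroup E] [Module ℝ E]
    [AddCommGroup F] [Module ℝ F] (α β : ℝ) (b : ℕ)
    (g1 : Fin n → E → F → E) (g2 : Fin n → E → F → F)
    (σ : Equiv.Perm (Fin n)) : ℕ → E × F → E × F
  | 0, z => z
  | t + 1, z =>
    let w := simEpoch α β b g1 g2 σ t z
    (w.1 - α • batchAvg b g1 σ t w.1 w.2, w.2 + β • batchAvg b g2 σ t w.1 w.2)

open scoped InnerProductSpace Topology

/-- A differentiable function on `[0, 1]` whose slope grows at most linearly lies below the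
corresponding parabola. -/
lemma sub_le_of_deriv_sub_le {ψ ψ' : ℝ → ℝ} {C : ℝ} (hψ : ∀ t, HasDerivAt ψ (ψ' t) t)
    (hC : ∀ t, 0 ≤ t → ψ' t - ψ' 0 ≤ C * t) : ψ 1 - ψ 0 - ψ' 0 ≤ C / 2 := by
  have hd : ∀ t, HasDerivAt (fun t => ψ t - t * ψ' 0 - C / 2 * t ^ 2)
      (ψ' t - ψ' 0 - C * t) t := fun t => by
    have := ((hψ t).sub ((hasDerivAt_id t).mul_const (ψ' 0))).sub
      (((hasDerivAt_id t).pow 2).const_mul (C / 2))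
    refine this.congr_deriv ?_
    simp
    ring
  have hanti := antitoneOn_of_deriv_nonpos (convex_Icc (0 : ℝ) 1)
    (fun t _ => (hd t).continuousAt.continuousWithinAt)
    (fun t _ => (hd t).differentiableAt.differentiableWithinAt)
    (fun t ht => by
      rw [interior_Icc] at ht
      rw [(hd t).deriv]
      linarith [hC t ht.1.le])
  have := hanti (Set.left_mem_Icc.2 zero_le_one) (Set.right_mem_Icc.2 zero_le_one) zero_le_one
  norm_num at this
  linarith

/-- A map with a sum-of-squares Lipschitz bound is jointly continuous. -/
lemma continuous_uncurry_of_sq_le {E F V : Type*} [NormedAddCommGroup E]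
    [NormedAddCommGroup F] [NormedAddCommGroup V] {L : ℝ} {g : E → F → V}
    (h : ∀ x y x' y', ‖g x y - g x' y'‖ ^ 2 ≤ L ^ 2 * (‖x - x'‖ ^ 2 + ‖y - y'‖ ^ 2)) :
    Continuous fun p : E × F => g p.1 p.2 := by
  rw [continuous_iff_continuousAt]
  intro p
  rw [ContinuousAt, tendsto_iff_norm_sub_tendsto_zero]
  have hlim : Filter.Tendsto
      (fun r : E × F => √(L ^ 2 * (‖r.1 - p.1‖ ^ 2 + ‖r.2 - p.2‖ ^ 2))) (𝓝 p) (𝓝 0) := by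
    have hc : Continuous
        (fun r : E × F => √(L ^ 2 * (‖r.1 - p.1‖ ^ 2 + ‖r.2 - p.2‖ ^ 2))) := by fun_prop
    simpa using hc.tendsto p
  exact squeeze_zero (fun _ => norm_nonneg _) (fun r => Real.le_sqrt_of_sq_le (h _ _ _ _)) hlim

section Smooth

variable {E F : Type*} [NormedAddCommGroup E] [InnerProductSpace ℝ E]
  [NormedAddCommGroup F] [InnerProductSpace ℝ F]

/-- Cauchy–Schwarz on a product, with one factor bounded in squared norm. -/
lemma abs_inner_add_inner_le {u v : E} {w s : F} {M : ℝ} (hM : 0 ≤ M)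
    (h : ‖u‖ ^ 2 + ‖w‖ ^ 2 ≤ M ^ 2 * (‖v‖ ^ 2 + ‖s‖ ^ 2)) :
    |⟪u, v⟫_ℝ + ⟪w, s⟫_ℝ| ≤ M * (‖v‖ ^ 2 + ‖s‖ ^ 2) := by
  have h1 : |⟪u, v⟫_ℝ + ⟪w, s⟫_ℝ| ≤ ‖u‖ * ‖v‖ + ‖w‖ * ‖s‖ :=
    (abs_add_le _ _).trans (add_le_add (abs_real_inner_le_norm _ _) (abs_real_inner_le_norm _ _))
  refine h1.trans (abs_le_of_sq_le_sq' ?_ (by positivity)).2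
  nlinarith [sq_nonneg (‖u‖ * ‖s‖ - ‖w‖ * ‖v‖),
    mul_le_mul_of_nonneg_right h (by positivity : 0 ≤ ‖v‖ ^ 2 + ‖s‖ ^ 2)]

variable [CompleteSpace E] [CompleteSpace F]

/-- Two-sided quadratic approximation of a jointly `L`-smooth function of two variables. -/
lemma abs_sub_linearization_le {f : E → F → ℝ} {g₁ : E → F → E} {g₂ : E → F → F} {L : ℝ}
    (hL : 0 ≤ L) (h₁ : ∀ x y, HasGradientAt (fun x' => f x' y) (g₁ x y) x)
    (h₂ : ∀ x y, HasGradientAt (fun y' => f x y') (g₂ x y) y)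
    (hs : ∀ x y x' y', ‖g₁ x y - g₁ x' y'‖ ^ 2 + ‖g₂ x y - g₂ x' y'‖ ^ 2
      ≤ L ^ 2 * (‖x - x'‖ ^ 2 + ‖y - y'‖ ^ 2)) (x u : E) (y v : F) :
    |f (x + u) (y + v) - f x y - (⟪g₁ x y, u⟫_ℝ + ⟪g₂ x y, v⟫_ℝ)|
      ≤ L / 2 * (‖u‖ ^ 2 + ‖v‖ ^ 2) := by
  have c₁ : Continuous fun p : E × F => g₁ p.1 p.2 := continuous_uncurry_of_sq_le
    fun a b a' b' => (le_add_of_nonneg_right (sq_nonneg _)).trans (hs a b a' b')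
  have c₂ : Continuous fun p : E × F => g₂ p.1 p.2 := continuous_uncurry_of_sq_le
    fun a b a' b' => (le_add_of_nonneg_left (sq_nonneg _)).trans (hs a b a' b')
  have hd : ∀ t : ℝ, HasDerivAt (fun t : ℝ => f (x + t • u) (y + t • v))
      (⟪g₁ (x + t • u) (y + t • v), u⟫_ℝ + ⟪g₂ (x + t • u) (y + t • v), v⟫_ℝ) t := by
    intro t
    have hF := (hasStrictFDerivAt_uncurry_coprod (𝕜 := ℝ) (f := f) (u := (x + t • u, y + t • v))
      (f₁ := fun a b => InnerProductSpace.toDual ℝ E (g₁ a b))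
      (f₂ := fun a b => InnerProductSpace.toDual ℝ F (g₂ a b))
      (.of_forall fun p => (h₁ p.1 p.2).hasFDerivAt) (.of_forall fun p => (h₂ p.1 p.2).hasFDerivAt)
      ((InnerProductSpace.toDual ℝ E).continuous.comp c₁).continuousAt
      ((InnerProductSpace.toDual ℝ F).continuous.comp c₂).continuousAt).hasFDerivAt
    have hp : HasDerivAt (fun t : ℝ => (x + t • u, y + t • v)) (u, v) t := by
      have := (((hasDerivAt_id t).smul_const u).const_add x).prodMk
        (((hasDerivAt_id t).smul_const v).const_add y)
      simpa using this
    refine (hF.comp_hasDerivAt t hp).congr_deriv ?_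
    simp [Function.HasUncurry.uncurry]
  have hC : ∀ t : ℝ, 0 ≤ t →
      |⟪g₁ (x + t • u) (y + t • v), u⟫_ℝ + ⟪g₂ (x + t • u) (y + t • v), v⟫_ℝ
        - (⟪g₁ x y, u⟫_ℝ + ⟪g₂ x y, v⟫_ℝ)| ≤ L * (‖u‖ ^ 2 + ‖v‖ ^ 2) * t := by
    intro t ht
    have := abs_inner_add_inner_le (u := g₁ (x + t • u) (y + t • v) - g₁ x y) (v := u)
      (w := g₂ (x + t • u) (y + t • v) - g₂ x y) (s := v) (mul_nonneg hL ht) (by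
        refine (hs _ _ _ _).trans_eq ?_
        simp only [add_sub_cancel_left, norm_smul, mul_pow, Real.norm_eq_abs, sq_abs]
        ring)
    rw [inner_sub_left, inner_sub_left] at this
    convert this using 1
    · congr 1; ring
    · ring
  have up := sub_le_of_deriv_sub_le (C := L * (‖u‖ ^ 2 + ‖v‖ ^ 2)) hd fun t ht => by
    simpa using (abs_le.1 (hC t ht)).2
  have lo := sub_le_of_deriv_sub_le (C := L * (‖u‖ ^ 2 + ‖v‖ ^ 2)) (fun t => (hd t).neg)
    fun t ht => by
      have := (abs_le.1 (hC t ht)).1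
      simp only [zero_smul, add_zero]
      linarith
  simp only [one_smul, zero_smul, add_zero, Pi.neg_apply] at up lo
  rw [abs_le]
  constructor <;> linarith

/-- A function squeezed between two paraboloids with a common tangent is differentiable. -/
lemma hasGradientAt_of_abs_le_sq {Φ : E → ℝ} {x g : E} {C : ℝ}
    (h : ∀ u, |Φ (x + u) - Φ x - ⟪g, u⟫_ℝ| ≤ C * ‖u‖ ^ 2) : HasGradientAt Φ g x := by
  rw [hasGradientAt_iff_isLittleO_nhds_zero]
  refine Asymptotics.IsBigO.trans_isLittleO (g := fun u : E => ‖u‖ ^ 2)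
    (.of_bound C (.of_forall fun u => ?_)) ?_
  · simpa using h u
  · simpa using Asymptotics.isLittleO_norm_pow_id (E' := E) one_lt_two

/-- If `Φ` is the maximum over `y` of a function whose `y`-gradient satisfies the PL inequality,
then `Φ` is differentiable, and a quadratic upper bound with constant `(L / μ + 1) L` holds. -/
lemma max_le_linearization {f : E → F → ℝ} {g₁ : E → F → E} {g₂ : E → F → F} {Φ : E → ℝ}
    {L μ : ℝ} (hL : 0 < L) (hμ : 0 < μ)
    (hf : ∀ x u y v, |f (x + u) (y + v) - f x y - (⟪g₁ x y, u⟫_ℝ + ⟪g₂ x y, v⟫_ℝ)|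
      ≤ L / 2 * (‖u‖ ^ 2 + ‖v‖ ^ 2))
    (h₂ : ∀ x y, HasGradientAt (fun y' => f x y') (g₂ x y) y)
    (hlip : ∀ x x' y, ‖g₂ x y - g₂ x' y‖ ≤ L * ‖x - x'‖)
    (hΦ : ∀ x, IsGreatest (Set.range (f x)) (Φ x))
    (hPL : ∀ x y, 2 * μ * (Φ x - f x y) ≤ ‖g₂ x y‖ ^ 2) (x u : E) :
    Φ (x + u) - Φ x - ⟪gradient Φ x, u⟫_ℝ ≤ (L / μ + 1) * L / 2 * ‖u‖ ^ 2 := by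
  obtain ⟨y, hy⟩ := (hΦ x).1
  have hmax : IsLocalMax (f x) y := .of_forall fun y' => by
    rw [hy]; exact (hΦ x).2 ⟨y', rfl⟩
  have hg : g₂ x y = 0 := by
    simpa using hmax.hasFDerivAt_eq_zero (h₂ x y).hasFDerivAt
  have key : ∀ u, |Φ (x + u) - Φ x - ⟪g₁ x y, u⟫_ℝ| ≤ (L / μ + 1) * L / 2 * ‖u‖ ^ 2 := by
    intro u
    have hfu := abs_le.1 (hf x u y 0)
    simp only [add_zero, inner_zero_right, norm_zero, hy] at hfu
    have hge : f (x + u) y ≤ Φ (x + u) := (hΦ (x + u)).2 ⟨y, rfl⟩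
    have hgu : ‖g₂ (x + u) y‖ ≤ L * ‖u‖ := by
      simpa [hg] using hlip (x + u) x y
    have hgap : Φ (x + u) - f (x + u) y ≤ L / μ * L / 2 * ‖u‖ ^ 2 := by
      have h1 : 2 * μ * (Φ (x + u) - f (x + u) y) ≤ (L * ‖u‖) ^ 2 :=
        (hPL _ _).trans (pow_le_pow_left₀ (norm_nonneg _) hgu 2)
      have h2 : L / μ * L / 2 * ‖u‖ ^ 2 = (L * ‖u‖) ^ 2 / (2 * μ) := by
        field_simp
      rw [h2, le_div_iff₀ (by positivity)]
      linarith
    have hnn : 0 ≤ L / μ * L / 2 * ‖u‖ ^ 2 := by positivity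
    rw [abs_le]
    constructor <;> nlinarith [hfu.1, hfu.2]
  rw [(hasGradientAt_of_abs_le_sq key).gradient]
  exact (abs_le.1 (key u)).2

end Smooth

/-- The iterates of an epoch are the initial point displaced by the accumulated batch steps. -/
lemma simEpoch_eq_sum {n : ℕ} {E F : Type*} [AddCommGroup E] [Module ℝ E]
    [AddCommGroup F] [Module ℝ F] (α β : ℝ) (b : ℕ) (g₁ : Fin n → E → F → E)
    (g₂ : Fin n → E → F → F) (σ : Equiv.Perm (Fin n)) (z : E × F) (t : ℕ) :
    simEpoch α β b g₁ g₂ σ t z =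
      (z.1 - α • ∑ s ∈ Finset.range t, batchAvg b g₁ σ s (simEpoch α β b g₁ g₂ σ s z).1
          (simEpoch α β b g₁ g₂ σ s z).2,
        z.2 + β • ∑ s ∈ Finset.range t, batchAvg b g₂ σ s (simEpoch α β b g₁ g₂ σ s z).1
          (simEpoch α β b g₁ g₂ σ s z).2) := by
  induction t with
  | zero => simp [simEpoch]
  | succ t ih =>
    rw [simEpoch, Finset.sum_range_succ, Finset.sum_range_succ, smul_add, smul_add]
    ext1
    · rw [sub_add_eq_sub_sub]
      exact congrArg (fun w => w.1 - _) ih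
    · rw [← add_assoc]
      exact congrArg (fun w => w.2 + _) ih

/-- **Lemma (naive per-epoch recurrence for the potential function, simSGDA-RR).**
Under component `L`-smoothness, well-definedness of the primal function and the `y`-side
`μ₂`-PL condition, for any realized permutation of an epoch of mini-batch simSGDA-RR the
stated deterministic inequality on `V_λ(z₀^{k+1}) − V_λ(z₀^k)` holds, where `g^k`, `h^k` are
the epoch aggregates (so that `x₀^{k+1} = x₀^k − qα g^k`, `y₀^{k+1} = y₀^k + qβ h^k`). -/
theorem sim_epoch_naive_recurrence
    (dx dy n b q : ℕ) (hn : 1 ≤ n) (hb : 0 < b) (hq : n = b * q)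
    (L μ2 lam : ℝ) (hL : 0 < L) (hμ2 : 0 < μ2) (hlam : 0 < lam)
    (f : Fin n → EuclideanSpace ℝ (Fin dx) → EuclideanSpace ℝ (Fin dy) → ℝ)
    (g1 : Fin n → EuclideanSpace ℝ (Fin dx) → EuclideanSpace ℝ (Fin dy) → EuclideanSpace ℝ (Fin dx))
    (g2 : Fin n → EuclideanSpace ℝ (Fin dx) → EuclideanSpace ℝ (Fin dy) → EuclideanSpace ℝ (Fin dy))
    (Fm : EuclideanSpace ℝ (Fin dx) → EuclideanSpace ℝ (Fin dy) → ℝ)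
    (G1 : EuclideanSpace ℝ (Fin dx) → EuclideanSpace ℝ (Fin dy) → EuclideanSpace ℝ (Fin dx))
    (G2 : EuclideanSpace ℝ (Fin dx) → EuclideanSpace ℝ (Fin dy) → EuclideanSpace ℝ (Fin dy))
    (hFm : ∀ x y, Fm x y = (∑ i, f i x y) / n)
    (hG1 : ∀ x y, G1 x y = (n : ℝ)⁻¹ • ∑ i, g1 i x y)
    (hG2 : ∀ x y, G2 x y = (n : ℝ)⁻¹ • ∑ i, g2 i x y)
    (hg1 : ∀ i x y, HasGradientAt (fun x' => f i x' y) (g1 i x y) x)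
    (hg2 : ∀ i x y, HasGradientAt (fun y' => f i x y') (g2 i x y) y)
    (hsmooth : ∀ i x y x' y',
      ‖g1 i x y - g1 i x' y'‖ ^ 2 + ‖g2 i x y - g2 i x' y'‖ ^ 2
        ≤ L ^ 2 * (‖x - x'‖ ^ 2 + ‖y - y'‖ ^ 2))
    (Φ : EuclideanSpace ℝ (Fin dx) → ℝ) (Φs : ℝ)
    (hΦ : ∀ x, IsGreatest (Set.range (Fm x)) (Φ x))
    (hYcl : ∀ x, IsClosed {y | Fm x y = Φ x})
    (hΦs : IsGLB (Set.range Φ) Φs)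
    (hPL2 : ∀ x y, 2 * μ2 * (Φ x - Fm x y) ≤ ‖G2 x y‖ ^ 2)
    (V : EuclideanSpace ℝ (Fin dx) → EuclideanSpace ℝ (Fin dy) → ℝ)
    (hV : ∀ x y, V x y = lam * (Φ x - Φs) + (Φ x - Fm x y))
    (α β : ℝ) (hα : 0 < α) (hβ : 0 < β)
    (σ : Equiv.Perm (Fin n))
    (x0 : EuclideanSpace ℝ (Fin dx)) (y0 : EuclideanSpace ℝ (Fin dy))
    (gk : EuclideanSpace ℝ (Fin dx)) (hk : EuclideanSpace ℝ (Fin dy))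
    (hgk : gk = (q : ℝ)⁻¹ • ∑ t ∈ Finset.range q,
      batchAvg b g1 σ t (simEpoch α β b g1 g2 σ t (x0, y0)).1 (simEpoch α β b g1 g2 σ t (x0, y0)).2)
    (hhk : hk = (q : ℝ)⁻¹ • ∑ t ∈ Finset.range q,
      batchAvg b g2 σ t (simEpoch α β b g1 g2 σ t (x0, y0)).1 (simEpoch α β b g1 g2 σ t (x0, y0)).2) :
    V (simEpoch α β b g1 g2 σ q (x0, y0)).1 (simEpoch α β b g1 g2 σ q (x0, y0)).2 - V x0 y0
      ≤ -((lam + 1) / 2) * ((q : ℝ) * α) * ‖gradient Φ x0‖ ^ 2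
        + (lam + 1) * ((q : ℝ) * α) * ‖gradient Φ x0 - G1 x0 y0‖ ^ 2
        + ((q : ℝ) * α / 2) * ‖G1 x0 y0‖ ^ 2
        - ((q : ℝ) * β / 2) * ‖G2 x0 y0‖ ^ 2
        + (lam + 1 / 2) * ((q : ℝ) * α) * ‖gk - G1 x0 y0‖ ^ 2
        + ((q : ℝ) * β / 2) * ‖hk - G2 x0 y0‖ ^ 2
        - (lam - ((lam + 1) * (L / μ2 + 1) + 1) * L * ((q : ℝ) * α)) * ((q : ℝ) * α / 2) * ‖gk‖ ^ 2
        - (1 - L * ((q : ℝ) * β)) * ((q : ℝ) * β / 2) * ‖hk‖ ^ 2 := by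
  have hn0 : (0 : ℝ) < n := by exact_mod_cast hn
  have hq0 : (q : ℝ) ≠ 0 := by
    intro h
    rw [Nat.cast_eq_zero] at h
    simp [h] at hq
    omega
  have hF : ∀ x u y v, |Fm (x + u) (y + v) - Fm x y - (⟪G1 x y, u⟫_ℝ + ⟪G2 x y, v⟫_ℝ)|
      ≤ L / 2 * (‖u‖ ^ 2 + ‖v‖ ^ 2) := by
    intro x u y v
    have havg : Fm (x + u) (y + v) - Fm x y - (⟪G1 x y, u⟫_ℝ + ⟪G2 x y, v⟫_ℝ) =
        (∑ i, (f i (x + u) (y + v) - f i x y - (⟪g1 i x y, u⟫_ℝ + ⟪g2 i x y, v⟫_ℝ))) / n := by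
      simp only [hFm, hG1, hG2, real_inner_smul_left, sum_inner, Finset.sum_sub_distrib,
        Finset.sum_add_distrib]
      ring
    rw [havg, abs_div, abs_of_pos hn0, div_le_iff₀ hn0]
    calc _ ≤ _ := Finset.abs_sum_le_sum_abs _ _
      _ ≤ _ := Finset.sum_le_card_nsmul _ _ _ fun i _ =>
        abs_sub_linearization_le hL.le (hg1 i) (hg2 i) (hsmooth i) x u y v
      _ = _ := by simp; ring
  have hlip : ∀ x x' y, ‖G2 x y - G2 x' y‖ ≤ L * ‖x - x'‖ := by
    intro x x' y
    have hi : ∀ i, ‖g2 i x y - g2 i x' y‖ ≤ L * ‖x - x'‖ := fun i => by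
      refine (abs_le_of_sq_le_sq' ?_ (by positivity)).2
      have := hsmooth i x y x' y
      simp only [sub_self, norm_zero] at this
      nlinarith [sq_nonneg ‖g1 i x y - g1 i x' y‖]
    rw [hG2, hG2, ← smul_sub, ← Finset.sum_sub_distrib, norm_smul, norm_inv, Real.norm_natCast,
      inv_mul_le_iff₀ hn0]
    refine (norm_sum_le_of_le _ fun i _ => hi i).trans_eq ?_
    simp
  have hgrad : ∀ x y, HasGradientAt (fun y' => Fm x y') (G2 x y) y := by
    intro x y
    refine hasGradientAt_of_abs_le_sq (C := L / 2) fun v => ?_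
    simpa using hF x 0 y v
  have hx : (simEpoch α β b g1 g2 σ q (x0, y0)).1 = x0 + (-((q : ℝ) * α)) • gk := by
    rw [simEpoch_eq_sum, hgk, smul_smul, neg_mul, mul_assoc, mul_comm α, mul_inv_cancel_left₀ hq0,
      neg_smul, sub_eq_add_neg]
  have hy : (simEpoch α β b g1 g2 σ q (x0, y0)).2 = y0 + ((q : ℝ) * β) • hk := by
    rw [simEpoch_eq_sum, hhk, smul_smul, mul_assoc, mul_comm β, mul_inv_cancel_left₀ hq0]
  rw [hx, hy, hV, hV]
  set a := (q : ℝ) * α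
  set c := (q : ℝ) * β
  have ha0 : 0 ≤ a := by positivity
  have hΦu := max_le_linearization hL hμ2 hF hgrad hlip hΦ hPL2 x0 (-a • gk)
  have hFl := (abs_le.1 (hF x0 (-a • gk) y0 (c • hk))).1
  set D := gradient Φ x0
  set A := G1 x0 y0
  set B := G2 x0 y0
  simp only [inner_smul_right, norm_smul, norm_neg, mul_pow, Real.norm_eq_abs, sq_abs] at hΦu hFl
  have hpar : ‖D - gk‖ ^ 2 ≤ 2 * ‖D - A‖ ^ 2 + 2 * ‖gk - A‖ ^ 2 := by
    have h := parallelogram_law_with_norm ℝ (D - A) (gk - A)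
    rw [sub_sub_sub_cancel_right] at h
    nlinarith [sq_nonneg ‖D - A + (gk - A)‖]
  have hDg := norm_sub_sq_real D gk
  have hgA := norm_sub_sq_real gk A
  have hhB := norm_sub_sq_real hk B
  rw [real_inner_comm] at hgA hhB
  have e1 := mul_le_mul_of_nonneg_left hΦu (by positivity : 0 ≤ lam + 1)
  have e2 := mul_le_mul_of_nonneg_left hpar (by positivity : 0 ≤ (lam + 1) * a / 2)
  rw [hDg] at e2
  rw [hhB, hgA]
  rw [hgA] at e2
  linarith
end

section
/- Suppose f satisfies Assumptions 1 (each f_i is L-smooth) and 2 (component gradient variance with constants A,B ≥ 0), n > 1, and the permutation σ_k is sampled uniformly at random from the symmetric group on {1,…,n}. If the step sizes satisfy α² + β² ≤ 1/(3q(q−1)L²), then the iterates of the k-th epoch of mini-batch simSGDA-RR started at z₀^k satisfy E_k[G_k] ≤ 2( q² + (q(q−1)/(n−1))A )·( α²‖∇₁f(z₀^k)‖² + β²‖∇₂f(z₀^k)‖² ) + (2q(q−1)/(n−1))(α² + β²)B, where E_k denotes expectation over σ_k given z₀^k and G_k := (1/q)∑_{t=1}^q ‖z_{t−1}^k − z₀^k‖².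 -/
open Finset

section Sampling

variable {V : Type*} [NormedAddCommGroup V] {n : ℕ}

/-- The second moment of a single draw under a uniformly random permutation. -/
lemma sum_perm_norm_sq (v : Fin n → V) (j : Fin n) :
    (n : ℝ) * ∑ σ : Equiv.Perm (Fin n), ‖v (σ j)‖ ^ 2
      = (Fintype.card (Equiv.Perm (Fin n)) : ℝ) * ∑ i, ‖v i‖ ^ 2 := by
  have hsymm : ∀ k, ∑ σ : Equiv.Perm (Fin n), ‖v (σ k)‖ ^ 2
      = ∑ σ : Equiv.Perm (Fin n), ‖v (σ j)‖ ^ 2 := by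
    intro k
    rw [← Equiv.sum_comp (Equiv.mulRight (Equiv.swap j k))]
    simp
  calc (n : ℝ) * ∑ σ : Equiv.Perm (Fin n), ‖v (σ j)‖ ^ 2
      = ∑ k, ∑ σ : Equiv.Perm (Fin n), ‖v (σ k)‖ ^ 2 := by simp [hsymm]
    _ = ∑ σ : Equiv.Perm (Fin n), ∑ i, ‖v i‖ ^ 2 := by
        rw [sum_comm]
        exact sum_congr rfl fun σ _ => Equiv.sum_comp σ fun i => ‖v i‖ ^ 2
    _ = _ := by simp

lemma norm_sum_sq_le_card_mul {ι : Type*} (s : Finset ι) (v : ι → V) :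
    ‖∑ i ∈ s, v i‖ ^ 2 ≤ #s * ∑ i ∈ s, ‖v i‖ ^ 2 :=
  (pow_le_pow_left₀ (norm_nonneg _) (norm_sum_le _ _) 2).trans sq_sum_le_card_mul_sum_sq

variable [InnerProductSpace ℝ V]

/-- The correlation of two distinct draws of a centred family under a uniformly random
permutation. -/
lemma sum_perm_inner (v : Fin n → V) (hv : ∑ i, v i = 0) {j k : Fin n} (hjk : j ≠ k) :
    ((n : ℝ) - 1) * ∑ σ : Equiv.Perm (Fin n), inner ℝ (v (σ j)) (v (σ k))
      = -∑ σ : Equiv.Perm (Fin n), ‖v (σ j)‖ ^ 2 := by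
  have hsymm : ∀ l ∈ univ.erase j, ∑ σ : Equiv.Perm (Fin n), inner ℝ (v (σ j)) (v (σ l))
      = ∑ σ : Equiv.Perm (Fin n), inner ℝ (v (σ j)) (v (σ k)) := by
    intro l hl
    rw [← Equiv.sum_comp (Equiv.mulRight (Equiv.swap k l))]
    simp [Equiv.swap_apply_of_ne_of_ne hjk (ne_of_mem_erase hl).symm]
  have hzero : ∑ l, ∑ σ : Equiv.Perm (Fin n), inner ℝ (v (σ j)) (v (σ l)) = 0 := by
    rw [sum_comm]
    refine sum_eq_zero fun σ _ => ?_
    rw [← inner_sum, Equiv.sum_comp σ v, hv, inner_zero_right]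
  rw [← add_sum_erase _ _ (mem_univ j), sum_congr rfl hsymm, sum_const,
    card_erase_of_mem (mem_univ j), card_univ, Fintype.card_fin, nsmul_eq_mul,
    Nat.cast_sub (by have := j.pos; omega)] at hzero
  simp only [real_inner_self_eq_norm_sq, Nat.cast_one] at hzero
  linarith

/-- Variance of a sum of draws without replacement from a centred finite population. -/
lemma sum_perm_norm_sum_sq (hn : 1 < n) (v : Fin n → V) (hv : ∑ i, v i = 0)
    (S : Finset (Fin n)) :
    ∑ σ : Equiv.Perm (Fin n), ‖∑ j ∈ S, v (σ j)‖ ^ 2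
      = (Fintype.card (Equiv.Perm (Fin n)) : ℝ) *
        ((#S : ℝ) * ((n : ℝ) - #S) / ((n : ℝ) - 1) * ((∑ i, ‖v i‖ ^ 2) / n)) := by
  have hn' : (1 : ℝ) < n := by exact_mod_cast hn
  have hn0 : (n : ℝ) ≠ 0 := by positivity
  have hn1 : (n : ℝ) - 1 ≠ 0 := by linarith
  set p : ℝ := (Fintype.card (Equiv.Perm (Fin n)) : ℝ) * ((∑ i, ‖v i‖ ^ 2) / n) with hp
  have hdiag : ∀ j, ∑ σ : Equiv.Perm (Fin n), ‖v (σ j)‖ ^ 2 = p := by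
    intro j
    have := sum_perm_norm_sq v j
    rw [hp]
    field_simp
    linarith
  have hpair : ∀ j k, ∑ σ : Equiv.Perm (Fin n), inner ℝ (v (σ j)) (v (σ k))
      = -p / (n - 1) + if j = k then p * n / (n - 1) else 0 := by
    intro j k
    split_ifs with h
    · subst h
      simp only [real_inner_self_eq_norm_sq, hdiag]
      field_simp
      ring
    · have := sum_perm_inner v hv h
      rw [hdiag] at this
      rw [add_zero, eq_div_iff hn1]
      linarith
  calc ∑ σ : Equiv.Perm (Fin n), ‖∑ j ∈ S, v (σ j)‖ ^ 2
      = ∑ j ∈ S, ∑ k ∈ S, ∑ σ : Equiv.Perm (Fin n), inner ℝ (v (σ j)) (v (σ k)) := by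
        simp only [← real_inner_self_eq_norm_sq, sum_inner, inner_sum]
        rw [sum_comm]
        exact sum_congr rfl fun j _ => by simp only [real_inner_comm, sum_comm (s := S)]
    _ = (#S : ℝ) * ((n : ℝ) - #S) / ((n : ℝ) - 1) * p := by
        simp only [hpair, sum_add_distrib, sum_const, nsmul_eq_mul, sum_ite_eq]
        rw [sum_ite_mem, inter_self, sum_const, nsmul_eq_mul]
        field_simp
        ring
    _ = _ := by rw [hp]; ring

lemma norm_add_sq_le_two_mul (a c : V) : ‖a + c‖ ^ 2 ≤ 2 * ‖a‖ ^ 2 + 2 * ‖c‖ ^ 2 := by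
  have := parallelogram_law_with_norm ℝ a c
  nlinarith [sq_nonneg ‖a - c‖]

end Sampling

section Batches

variable {n : ℕ} {E F V : Type*} [NormedAddCommGroup V] [InnerProductSpace ℝ V]

lemma sum_range_batchAvg (b : ℕ) (g : Fin n → E → F → V) (σ : Equiv.Perm (Fin n)) (t : ℕ)
    (x : E) (y : F) :
    ∑ s ∈ range t, batchAvg b g σ s x y
      = (b : ℝ)⁻¹ • ∑ j ∈ univ.filter (fun j : Fin n => (j : ℕ) < b * t), g (σ j) x y := by
  induction t with
  | zero => simp
  | succ t ih =>
    have hle : b * t ≤ b * (t + 1) := Nat.mul_le_mul_left b t.le_succ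
    rw [sum_range_succ, ih, batchAvg, ← smul_add, ← sum_union]
    · congr 2
      ext j
      simp only [mem_union, mem_filter, mem_univ, true_and]
      omega
    · rw [disjoint_left]
      intro j
      simp only [mem_filter, mem_univ, true_and]
      omega

lemma card_filter_val_lt {m : ℕ} (hm : m ≤ n) :
    #(univ.filter (fun j : Fin n => (j : ℕ) < m)) = m := by
  rw [Fin.card_filter_val_lt, min_eq_right hm]

lemma card_batch_le (b t : ℕ) :
    #(univ.filter (fun j : Fin n => b * t ≤ (j : ℕ) ∧ (j : ℕ) < b * (t + 1))) ≤ b := by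
  calc _ = #((univ.filter (fun j : Fin n => b * t ≤ (j : ℕ) ∧ (j : ℕ) < b * (t + 1))).image
        Fin.val) := (card_image_of_injective _ Fin.val_injective).symm
    _ ≤ #(Ico (b * t) (b * (t + 1))) := by
        refine card_le_card fun m hm => ?_
        obtain ⟨j, hj, rfl⟩ := mem_image.1 hm
        simpa using hj
    _ = b := by rw [Nat.card_Ico, mul_add, mul_one, Nat.add_sub_cancel_left]

/-- Second-moment bound, over a uniformly random permutation, for the sum of the first `t`
mini-batch averages at a fixed point. -/
lemma sum_perm_norm_sum_batchAvg_sq_le {b q : ℕ} (hn : 1 < n) (hb : 0 < b) (hq : n = b * q)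
    (g : Fin n → E → F → V) (x : E) (y : F) (G : V) (hG : G = (n : ℝ)⁻¹ • ∑ i, g i x y)
    {t : ℕ} (ht : t ≤ q) :
    ∑ σ : Equiv.Perm (Fin n), ‖∑ s ∈ range t, batchAvg b g σ s x y‖ ^ 2
      ≤ (Fintype.card (Equiv.Perm (Fin n)) : ℝ) * (2 * (t : ℝ) ^ 2 * ‖G‖ ^ 2
          + 2 * ((t : ℝ) * (q - t) / (n - 1)) * ((∑ i, ‖g i x y - G‖ ^ 2) / n)) := by
  have hb0 : (b : ℝ) ≠ 0 := by positivity
  have hn0 : (n : ℝ) ≠ 0 := by positivity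
  have hn1 : (n : ℝ) - 1 ≠ 0 := by
    have : (1 : ℝ) < n := by exact_mod_cast hn
    linarith
  have hcard := card_filter_val_lt (n := n) (m := b * t) (hq ▸ Nat.mul_le_mul_left b ht)
  set S := univ.filter (fun j : Fin n => (j : ℕ) < b * t)
  have hcentred : ∑ i, (g i x y - G) = 0 := by
    rw [sum_sub_distrib, sum_const, card_univ, Fintype.card_fin, ← Nat.cast_smul_eq_nsmul ℝ, hG,
      smul_inv_smul₀ hn0, sub_self]
  have hvar := sum_perm_norm_sum_sq hn (fun i => g i x y - G) hcentred S
  have hsplit : ∀ σ : Equiv.Perm (Fin n), ∑ s ∈ range t, batchAvg b g σ s x y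
      = (t : ℝ) • G + (b : ℝ)⁻¹ • ∑ j ∈ S, (g (σ j) x y - G) := by
    intro σ
    rw [sum_range_batchAvg, sum_sub_distrib, sum_const, hcard, ← Nat.cast_smul_eq_nsmul ℝ,
      smul_sub, smul_smul, Nat.cast_mul, inv_mul_cancel_left₀ hb0]
    abel
  calc ∑ σ : Equiv.Perm (Fin n), ‖∑ s ∈ range t, batchAvg b g σ s x y‖ ^ 2
      ≤ ∑ σ : Equiv.Perm (Fin n), (2 * ((t : ℝ) ^ 2 * ‖G‖ ^ 2)
          + 2 * (((b : ℝ)⁻¹) ^ 2 * ‖∑ j ∈ S, (g (σ j) x y - G)‖ ^ 2)) := by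
        refine sum_le_sum fun σ _ => ?_
        rw [hsplit]
        refine (norm_add_sq_le_two_mul _ _).trans_eq ?_
        simp only [norm_smul, mul_pow, Real.norm_eq_abs, sq_abs]
    _ = _ := by
        rw [sum_add_distrib, sum_const, ← mul_sum, ← mul_sum, hvar, card_univ, nsmul_eq_mul,
          hcard]
        have hnq : (n : ℝ) = b * q := by exact_mod_cast hq
        push_cast
        have : (b : ℝ) * t * ((n : ℝ) - b * t) = b ^ 2 * (t * (q - t)) := by rw [hnq]; ring
        rw [this]
        field_simp

lemma norm_batchAvg_sub_sq_le {b : ℕ} (g : Fin n → E → F → V) (σ : Equiv.Perm (Fin n)) (t : ℕ)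
    (x x' : E) (y y' : F) :
    ‖batchAvg b g σ t x y - batchAvg b g σ t x' y'‖ ^ 2 ≤ (b : ℝ)⁻¹ *
      ∑ j ∈ univ.filter (fun j : Fin n => b * t ≤ (j : ℕ) ∧ (j : ℕ) < b * (t + 1)),
        ‖g (σ j) x y - g (σ j) x' y'‖ ^ 2 := by
  have hcard : (#(univ.filter (fun j : Fin n => b * t ≤ (j : ℕ) ∧ (j : ℕ) < b * (t + 1))) : ℝ)
      ≤ b := by exact_mod_cast card_batch_le b t
  rw [batchAvg, batchAvg, ← smul_sub, ← sum_sub_distrib, norm_smul, mul_pow, Real.norm_eq_abs,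
    sq_abs]
  refine (mul_le_mul_of_nonneg_left ((norm_sum_sq_le_card_mul _ _).trans
    (mul_le_mul_of_nonneg_right hcard (by positivity))) (by positivity)).trans_eq ?_
  rcases eq_or_ne (b : ℝ) 0 with h | h
  · simp [h]
  · field_simp

end Batches

section Epoch

variable {n : ℕ} {E F : Type*} [NormedAddCommGroup E] [InnerProductSpace ℝ E]
  [NormedAddCommGroup F] [InnerProductSpace ℝ F]

/-- Joint Lipschitz continuity passes from the components to the mini-batch averages. -/
lemma norm_batchAvg_sub_sq_add_le {b : ℕ} {L : ℝ}
    {g1 : Fin n → E → F → E} {g2 : Fin n → E → F → F}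
    (hsmooth : ∀ i x y x' y', ‖g1 i x y - g1 i x' y'‖ ^ 2 + ‖g2 i x y - g2 i x' y'‖ ^ 2
      ≤ L ^ 2 * (‖x - x'‖ ^ 2 + ‖y - y'‖ ^ 2))
    (σ : Equiv.Perm (Fin n)) (t : ℕ) (x x' : E) (y y' : F) :
    ‖batchAvg b g1 σ t x y - batchAvg b g1 σ t x' y'‖ ^ 2
        + ‖batchAvg b g2 σ t x y - batchAvg b g2 σ t x' y'‖ ^ 2
      ≤ L ^ 2 * (‖x - x'‖ ^ 2 + ‖y - y'‖ ^ 2) := by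
  have hcard : (#(univ.filter (fun j : Fin n => b * t ≤ (j : ℕ) ∧ (j : ℕ) < b * (t + 1))) : ℝ)
      ≤ b := by exact_mod_cast card_batch_le b t
  refine (add_le_add (norm_batchAvg_sub_sq_le g1 σ t x x' y y')
    (norm_batchAvg_sub_sq_le g2 σ t x x' y y')).trans ?_
  rw [← mul_add, ← sum_add_distrib]
  refine (mul_le_mul_of_nonneg_left (sum_le_sum fun j _ => hsmooth (σ j) x y x' y')
    (by positivity)).trans ?_
  rw [sum_const, nsmul_eq_mul, ← mul_assoc]
  refine mul_le_of_le_one_left (by positivity) ?_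
  exact (mul_le_mul_of_nonneg_left hcard (by positivity)).trans inv_mul_le_one

lemma simEpoch_fst_sub (α β : ℝ) (b : ℕ) (g1 : Fin n → E → F → E) (g2 : Fin n → E → F → F)
    (σ : Equiv.Perm (Fin n)) (z : E × F) (t : ℕ) :
    (simEpoch α β b g1 g2 σ t z).1 - z.1 = -(α • ∑ s ∈ range t,
      batchAvg b g1 σ s (simEpoch α β b g1 g2 σ s z).1 (simEpoch α β b g1 g2 σ s z).2) := by
  induction t with
  | zero => simp [simEpoch]
  | succ t ih =>
    rw [sum_range_succ, smul_add, neg_add, ← ih, simEpoch]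
    exact sub_right_comm _ _ _ |>.trans (sub_eq_add_neg _ _)

lemma simEpoch_snd_sub (α β : ℝ) (b : ℕ) (g1 : Fin n → E → F → E) (g2 : Fin n → E → F → F)
    (σ : Equiv.Perm (Fin n)) (z : E × F) (t : ℕ) :
    (simEpoch α β b g1 g2 σ t z).2 - z.2 = β • ∑ s ∈ range t,
      batchAvg b g2 σ s (simEpoch α β b g1 g2 σ s z).1 (simEpoch α β b g1 g2 σ s z).2 := by
  induction t with
  | zero => simp [simEpoch]
  | succ t ih =>
    rw [sum_range_succ, smul_add, ← ih, simEpoch]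
    exact add_sub_right_comm _ _ _

lemma norm_sum_sq_le_of_ref {V : Type*} [NormedAddCommGroup V] [InnerProductSpace ℝ V] (t : ℕ)
    (u w : ℕ → V) : ‖∑ s ∈ range t, u s‖ ^ 2
      ≤ 2 * (t * ∑ s ∈ range t, ‖u s - w s‖ ^ 2) + 2 * ‖∑ s ∈ range t, w s‖ ^ 2 := by
  have h := norm_add_sq_le_two_mul (∑ s ∈ range t, (u s - w s)) (∑ s ∈ range t, w s)
  have h' := norm_sum_sq_le_card_mul (range t) fun s => u s - w s
  rw [card_range] at h'
  rw [← sum_add_distrib] at h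
  simp only [sub_add_cancel] at h
  linarith

/-- One-step drift recursion, for a fixed permutation. -/
lemma simEpoch_drift_le {b : ℕ} {L : ℝ} (α β : ℝ)
    {g1 : Fin n → E → F → E} {g2 : Fin n → E → F → F}
    (hsmooth : ∀ i x y x' y', ‖g1 i x y - g1 i x' y'‖ ^ 2 + ‖g2 i x y - g2 i x' y'‖ ^ 2
      ≤ L ^ 2 * (‖x - x'‖ ^ 2 + ‖y - y'‖ ^ 2))
    (σ : Equiv.Perm (Fin n)) (z : E × F) (t : ℕ) :
    ‖(simEpoch α β b g1 g2 σ t z).1 - z.1‖ ^ 2 + ‖(simEpoch α β b g1 g2 σ t z).2 - z.2‖ ^ 2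
      ≤ 2 * (α ^ 2 + β ^ 2) * L ^ 2 * t * ∑ s ∈ range t,
          (‖(simEpoch α β b g1 g2 σ s z).1 - z.1‖ ^ 2
            + ‖(simEpoch α β b g1 g2 σ s z).2 - z.2‖ ^ 2)
        + 2 * (α ^ 2 * ‖∑ s ∈ range t, batchAvg b g1 σ s z.1 z.2‖ ^ 2
            + β ^ 2 * ‖∑ s ∈ range t, batchAvg b g2 σ s z.1 z.2‖ ^ 2) := by
  have h1 := norm_sum_sq_le_of_ref t
    (fun s => batchAvg b g1 σ s (simEpoch α β b g1 g2 σ s z).1 (simEpoch α β b g1 g2 σ s z).2)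
    (fun s => batchAvg b g1 σ s z.1 z.2)
  have h2 := norm_sum_sq_le_of_ref t
    (fun s => batchAvg b g2 σ s (simEpoch α β b g1 g2 σ s z).1 (simEpoch α β b g1 g2 σ s z).2)
    (fun s => batchAvg b g2 σ s z.1 z.2)
  have h3 := sum_le_sum fun s (_ : s ∈ range t) => norm_batchAvg_sub_sq_add_le (b := b) hsmooth σ s
    (simEpoch α β b g1 g2 σ s z).1 z.1 (simEpoch α β b g1 g2 σ s z).2 z.2
  rw [sum_add_distrib, ← mul_sum] at h3
  rw [simEpoch_fst_sub α β b g1 g2 σ z t, simEpoch_snd_sub α β b g1 g2 σ z t, norm_neg, norm_smul,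
    norm_smul, mul_pow, mul_pow, Real.norm_eq_abs, Real.norm_eq_abs, sq_abs, sq_abs]
  have h1' := mul_le_mul_of_nonneg_left h1 (sq_nonneg α)
  have h2' := mul_le_mul_of_nonneg_left h2 (sq_nonneg β)
  have h3' := mul_le_mul_of_nonneg_left h3
    (show 0 ≤ 2 * (α ^ 2 + β ^ 2) * (t : ℝ) by positivity)
  have ha := mul_nonneg (show 0 ≤ 2 * β ^ 2 * (t : ℝ) by positivity)
    (sum_nonneg fun s (_ : s ∈ range t) => sq_nonneg
      ‖batchAvg b g1 σ s (simEpoch α β b g1 g2 σ s z).1 (simEpoch α β b g1 g2 σ s z).2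
        - batchAvg b g1 σ s z.1 z.2‖)
  have hb := mul_nonneg (show 0 ≤ 2 * α ^ 2 * (t : ℝ) by positivity)
    (sum_nonneg fun s (_ : s ∈ range t) => sq_nonneg
      ‖batchAvg b g2 σ s (simEpoch α β b g1 g2 σ s z).1 (simEpoch α β b g1 g2 σ s z).2
        - batchAvg b g2 σ s z.1 z.2‖)
  linarith

end Epoch

lemma sum_range_natCast (q : ℕ) : ∑ t ∈ range q, (t : ℝ) = q * (q - 1) / 2 := by
  induction q with
  | zero => simp
  | succ q ih => rw [sum_range_succ, ih]; push_cast; ring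

lemma sum_range_natCast_sq (q : ℕ) :
    ∑ t ∈ range q, (t : ℝ) ^ 2 = q * (q - 1) * (2 * q - 1) / 6 := by
  induction q with
  | zero => simp
  | succ q ih => rw [sum_range_succ, ih]; push_cast; ring

/-- A discrete Grönwall-type inequality for sums with linearly growing weights. -/
lemma sum_range_le_of_recursion {q : ℕ} {c : ℝ} {D e : ℕ → ℝ} (hc : 0 ≤ c) (hD : ∀ t, 0 ≤ D t)
    (hcq : 3 * (c * (q * (q - 1))) ≤ 1)
    (hrec : ∀ t, D t ≤ 2 * c * t * ∑ s ∈ range t, D s + 2 * e t) :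
    ∑ t ∈ range q, D t ≤ 3 * ∑ t ∈ range q, e t := by
  set T := ∑ t ∈ range q, D t with hT
  have hT0 : 0 ≤ T := sum_nonneg fun t _ => hD t
  have h : T ≤ ∑ t ∈ range q, (2 * c * T * t + 2 * e t) := by
    refine sum_le_sum fun t ht => (hrec t).trans ?_
    have hle : ∑ s ∈ range t, D s ≤ T := sum_le_sum_of_subset_of_nonneg
      (range_subset_range.2 (mem_range.1 ht).le) fun s _ _ => hD s
    have := mul_le_mul_of_nonneg_left hle (show 0 ≤ 2 * c * (t : ℝ) by positivity)
    linarith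
  rw [sum_add_distrib, ← mul_sum, ← mul_sum, sum_range_natCast] at h
  nlinarith [mul_le_mul_of_nonneg_right hcq hT0]

/-- **Lemma (expected iterate drift within an epoch of simSGDA-RR).**
Under component `L`-smoothness and the component-gradient-variance assumption, for `n > 1`
and step sizes with `α² + β² ≤ 1/(3q(q−1)L²)`, the expected drift
`E_k[G_k] = E_k[(1/q)∑_{t=1}^q ‖z_{t−1} − z₀‖²]` over a uniformly random permutation is at
most `2(q² + (q(q−1)/(n−1))A)(α²‖∇₁f(z₀)‖² + β²‖∇₂f(z₀)‖²) + (2q(q−1)/(n−1))(α²+β²)B`. -/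
theorem sim_epoch_expected_drift_bound
    (dx dy n b q : ℕ) (hn : 1 < n) (hb : 0 < b) (hq : n = b * q)
    (L A B : ℝ) (hL : 0 < L) (hA : 0 ≤ A) (hB : 0 ≤ B)
    (f : Fin n → EuclideanSpace ℝ (Fin dx) → EuclideanSpace ℝ (Fin dy) → ℝ)
    (g1 : Fin n → EuclideanSpace ℝ (Fin dx) → EuclideanSpace ℝ (Fin dy) → EuclideanSpace ℝ (Fin dx))
    (g2 : Fin n → EuclideanSpace ℝ (Fin dx) → EuclideanSpace ℝ (Fin dy) → EuclideanSpace ℝ (Fin dy))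
    (G1 : EuclideanSpace ℝ (Fin dx) → EuclideanSpace ℝ (Fin dy) → EuclideanSpace ℝ (Fin dx))
    (G2 : EuclideanSpace ℝ (Fin dx) → EuclideanSpace ℝ (Fin dy) → EuclideanSpace ℝ (Fin dy))
    (hG1 : ∀ x y, G1 x y = (n : ℝ)⁻¹ • ∑ i, g1 i x y)
    (hG2 : ∀ x y, G2 x y = (n : ℝ)⁻¹ • ∑ i, g2 i x y)
    (hg1 : ∀ i x y, HasGradientAt (fun x' => f i x' y) (g1 i x y) x)
    (hg2 : ∀ i x y, HasGradientAt (fun y' => f i x y') (g2 i x y) y)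
    (hsmooth : ∀ i x y x' y',
      ‖g1 i x y - g1 i x' y'‖ ^ 2 + ‖g2 i x y - g2 i x' y'‖ ^ 2
        ≤ L ^ 2 * (‖x - x'‖ ^ 2 + ‖y - y'‖ ^ 2))
    (hvar1 : ∀ x y, (∑ i, ‖g1 i x y - G1 x y‖ ^ 2) / n ≤ A * ‖G1 x y‖ ^ 2 + B)
    (hvar2 : ∀ x y, (∑ i, ‖g2 i x y - G2 x y‖ ^ 2) / n ≤ A * ‖G2 x y‖ ^ 2 + B)
    (α β : ℝ)
    (hstep : α ^ 2 + β ^ 2 ≤ 1 / (3 * (q : ℝ) * ((q : ℝ) - 1) * L ^ 2))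
    (x0 : EuclideanSpace ℝ (Fin dx)) (y0 : EuclideanSpace ℝ (Fin dy)) :
    (∑ σ : Equiv.Perm (Fin n),
        (q : ℝ)⁻¹ * ∑ t ∈ Finset.range q,
          (‖(simEpoch α β b g1 g2 σ t (x0, y0)).1 - x0‖ ^ 2 +
            ‖(simEpoch α β b g1 g2 σ t (x0, y0)).2 - y0‖ ^ 2)) /
      (Fintype.card (Equiv.Perm (Fin n)) : ℝ)
      ≤ 2 * ((q : ℝ) ^ 2 + ((q : ℝ) * ((q : ℝ) - 1) / ((n : ℝ) - 1)) * A) *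
          (α ^ 2 * ‖G1 x0 y0‖ ^ 2 + β ^ 2 * ‖G2 x0 y0‖ ^ 2)
        + (2 * (q : ℝ) * ((q : ℝ) - 1) / ((n : ℝ) - 1)) * (α ^ 2 + β ^ 2) * B := by
  have hq0 : 0 < q := Nat.pos_of_ne_zero (by rintro rfl; omega)
  have hq1 : (1 : ℝ) ≤ q := by exact_mod_cast hq0
  have hn1 : (0 : ℝ) < (n : ℝ) - 1 := by
    have : (1 : ℝ) < n := by exact_mod_cast hn
    linarith
  have hcq : 3 * ((α ^ 2 + β ^ 2) * L ^ 2 * (q * (q - 1))) ≤ 1 := by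
    rcases hq1.eq_or_lt with h | h
    · simp [← h]
    · have hpos : 0 < 3 * (q : ℝ) * ((q : ℝ) - 1) * L ^ 2 :=
        mul_pos (mul_pos (by positivity) (by linarith)) (by positivity)
      have := (le_div_iff₀ hpos).1 hstep
      linarith
  have hcard : (0 : ℝ) < Fintype.card (Equiv.Perm (Fin n)) := by exact_mod_cast Fintype.card_pos
  set N := α ^ 2 * ‖G1 x0 y0‖ ^ 2 + β ^ 2 * ‖G2 x0 y0‖ ^ 2 with hN
  have hN0 : 0 ≤ N := by positivity
  have hpoint : ∀ t ∈ range q, ∑ σ : Equiv.Perm (Fin n),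
      (α ^ 2 * ‖∑ s ∈ range t, batchAvg b g1 σ s x0 y0‖ ^ 2
        + β ^ 2 * ‖∑ s ∈ range t, batchAvg b g2 σ s x0 y0‖ ^ 2)
      ≤ (Fintype.card (Equiv.Perm (Fin n)) : ℝ) * (2 * (t : ℝ) ^ 2 * N
        + 2 * ((t : ℝ) * (q - t) / (n - 1)) * (A * N + (α ^ 2 + β ^ 2) * B)) := by
    intro t ht
    have htq := (mem_range.1 ht).le
    have hw : (0 : ℝ) ≤ 2 * ((t : ℝ) * (q - t) / (n - 1)) := by
      have : (t : ℝ) ≤ q := by exact_mod_cast htq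
      have := sub_nonneg.2 this
      positivity
    rw [sum_add_distrib, ← mul_sum, ← mul_sum]
    have h1 := (sum_perm_norm_sum_batchAvg_sq_le hn hb hq g1 x0 y0 _ (hG1 x0 y0) htq).trans
      (mul_le_mul_of_nonneg_left
        (add_le_add_right (mul_le_mul_of_nonneg_left (hvar1 x0 y0) hw) _) hcard.le)
    have h2 := (sum_perm_norm_sum_batchAvg_sq_le hn hb hq g2 x0 y0 _ (hG2 x0 y0) htq).trans
      (mul_le_mul_of_nonneg_left
        (add_le_add_right (mul_le_mul_of_nonneg_left (hvar2 x0 y0) hw) _) hcard.le)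
    refine (add_le_add (mul_le_mul_of_nonneg_left h1 (sq_nonneg α))
      (mul_le_mul_of_nonneg_left h2 (sq_nonneg β))).trans_eq ?_
    rw [hN]
    ring
  rw [div_le_iff₀ hcard, ← mul_sum, inv_mul_le_iff₀ (by positivity)]
  calc ∑ σ : Equiv.Perm (Fin n), ∑ t ∈ range q,
          (‖(simEpoch α β b g1 g2 σ t (x0, y0)).1 - x0‖ ^ 2 +
            ‖(simEpoch α β b g1 g2 σ t (x0, y0)).2 - y0‖ ^ 2)
      ≤ ∑ σ : Equiv.Perm (Fin n), 3 * ∑ t ∈ range q,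
          (α ^ 2 * ‖∑ s ∈ range t, batchAvg b g1 σ s x0 y0‖ ^ 2
            + β ^ 2 * ‖∑ s ∈ range t, batchAvg b g2 σ s x0 y0‖ ^ 2) := by
        refine sum_le_sum fun σ _ => sum_range_le_of_recursion
          (c := (α ^ 2 + β ^ 2) * L ^ 2) (by positivity) (fun t => by positivity) hcq fun t => ?_
        have := simEpoch_drift_le (b := b) α β hsmooth σ (x0, y0) t
        simpa only [mul_assoc] using this
    _ ≤ 3 * ∑ t ∈ range q, (Fintype.card (Equiv.Perm (Fin n)) : ℝ) * (2 * (t : ℝ) ^ 2 * N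
        + 2 * ((t : ℝ) * (q - t) / (n - 1)) * (A * N + (α ^ 2 + β ^ 2) * B)) := by
        rw [← mul_sum, sum_comm]
        exact mul_le_mul_of_nonneg_left (sum_le_sum hpoint) (by norm_num)
    _ = (Fintype.card (Equiv.Perm (Fin n)) : ℝ) * (q * ((q - 1) * (2 * q - 1) * N
        + (q - 1) * (q + 1) / (n - 1) * (A * N + (α ^ 2 + β ^ 2) * B))) := by
        have hsum : ∑ t ∈ range q, (2 * (t : ℝ) ^ 2 * N
            + 2 * ((t : ℝ) * (q - t) / (n - 1)) * (A * N + (α ^ 2 + β ^ 2) * B))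
            = 2 * N * ∑ t ∈ range q, (t : ℝ) ^ 2
              + 2 / (n - 1) * (A * N + (α ^ 2 + β ^ 2) * B)
                * (q * ∑ t ∈ range q, (t : ℝ) - ∑ t ∈ range q, (t : ℝ) ^ 2) := by
          rw [mul_sum, mul_sum, ← sum_sub_distrib, mul_sum, ← sum_add_distrib]
          exact sum_congr rfl fun t _ => by ring
        rw [← mul_sum, hsum, sum_range_natCast, sum_range_natCast_sq]
        ring
    _ ≤ (Fintype.card (Equiv.Perm (Fin n)) : ℝ) * (q * (2 * (q : ℝ) ^ 2 * N
        + (q - 1) * (2 * q) / (n - 1) * (A * N + (α ^ 2 + β ^ 2) * B))) := by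
        have := sub_nonneg.2 hq1
        have : ((q : ℝ) - 1) * (2 * q - 1) ≤ 2 * (q : ℝ) ^ 2 := by nlinarith
        gcongr
        linarith
    _ = _ := by ring
end

section
/- Let g : ℝ^d → ℝ be differentiable with nonempty, closed optimal set X* := argmin g, and for each x let x_p denote a projection of x onto X* (a nearest point of X* to x). Then the following implications hold: (1) if g is μ-strongly convex, then g is μ-PL and satisfies the μ-restricted secant inequality (RSI); (2) if g is μ-PL, then g satisfies the μ-quadratic growth (QG) condition and the μ-error bound (EB) condition; (3) if g satisfies μ-RSI, then g satisfies μ-EB; (4) if g satisfies μ-EB and is L-smooth, then g is (μ²/L)-PL. -/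
open RealInnerProductSpace

section Helpers

variable {E : Type*} [NormedAddCommGroup E] [InnerProductSpace ℝ E] [CompleteSpace E]

/-- Derivative of a differentiable function along a line, in terms of its gradient. -/
lemma hasDerivAt_comp_line_gradient {g : E → ℝ} (hg : Differentiable ℝ g) (x v : E) (t : ℝ) :
    HasDerivAt (fun s : ℝ => g (x + s • v)) ⟪gradient g (x + t • v), v⟫ t := by
  have hline : HasDerivAt (fun s : ℝ => x + s • v) v t := by
    simpa using ((hasDerivAt_id t).smul_const v).const_add x
  have h := (hg (x + t • v)).hasGradientAt.hasFDerivAt.comp_hasDerivAt t hline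
  simpa [Function.comp_def] using h

lemma gradient_eq_zero_of_forall_le {g : E → ℝ} {x : E} (h : ∀ y, g x ≤ g y) :
    gradient g x = 0 := by
  have hmin : IsLocalMin g x := Filter.Eventually.of_forall h
  simp [gradient, hmin.fderiv_eq_zero]

/-- The descent lemma at a critical point. -/
lemma le_add_sq_of_gradient_eq_zero {g : E → ℝ} (hg : Differentiable ℝ g) {L : ℝ}
    (hL : ∀ x y, ‖gradient g x - gradient g y‖ ≤ L * ‖x - y‖) {p : E}
    (hp : gradient g p = 0) (x : E) : g x ≤ g p + L / 2 * ‖x - p‖ ^ 2 := by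
  set v := x - p with hv
  have hder : ∀ t : ℝ, HasDerivAt (fun s : ℝ => g (p + s • v) - L / 2 * ‖v‖ ^ 2 * s ^ 2)
      (⟪gradient g (p + t • v), v⟫ - L / 2 * ‖v‖ ^ 2 * (2 * t)) t := fun t => by
    simpa using (hasDerivAt_comp_line_gradient hg p v t).fun_sub
      ((hasDerivAt_pow 2 t).const_mul (L / 2 * ‖v‖ ^ 2))
  have hanti : AntitoneOn (fun s : ℝ => g (p + s • v) - L / 2 * ‖v‖ ^ 2 * s ^ 2)
      (Set.Icc 0 1) := by
    refine antitoneOn_of_deriv_nonpos (convex_Icc 0 1)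
      (fun t _ => (hder t).continuousAt.continuousWithinAt)
      (fun t _ => (hder t).differentiableAt.differentiableWithinAt) fun t ht => ?_
    rw [interior_Icc] at ht
    rw [(hder t).deriv]
    have hgrad : ‖gradient g (p + t • v)‖ ≤ L * (t * ‖v‖) := by
      simpa [hp, norm_smul, abs_of_pos ht.1] using hL (p + t • v) p
    have hcs := real_inner_le_norm (gradient g (p + t • v)) v
    nlinarith [mul_le_mul_of_nonneg_right hgrad (norm_nonneg v)]
  have h := hanti (Set.left_mem_Icc.2 zero_le_one) (Set.right_mem_Icc.2 zero_le_one) zero_le_one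
  simp only [hv, one_smul, zero_smul, add_zero, add_sub_cancel] at h
  linarith

/-- If `√(g - m)` has slope at most `c` at `y`, where `g y > m`, then
`‖∇g y‖ ≤ 2 c √(g y - m)`. -/
lemma norm_gradient_le_of_sqrt_slope_le {g : E → ℝ} (hg : Differentiable ℝ g) {m c : ℝ} {y : E}
    (hy : m < g y) (hc : 0 ≤ c)
    (hslope : ∀ z, √(g y - m) ≤ √(g z - m) + c * ‖z - y‖) :
    ‖gradient g y‖ ≤ 2 * c * √(g y - m) := by
  have hpos : 0 < √(g y - m) := Real.sqrt_pos.2 (sub_pos.2 hy)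
  set w := gradient g y with hw
  have hline := hasDerivAt_comp_line_gradient hg y (-w) 0
  have hder : HasDerivAt (fun s : ℝ => √(g (y + s • -w) - m) + c * ‖w‖ * s)
      (-‖w‖ ^ 2 / (2 * √(g y - m)) + c * ‖w‖) 0 := by
    have h := ((hline.sub_const m).sqrt (by simpa using (sub_pos.2 hy).ne')).fun_add
      ((hasDerivAt_id (0 : ℝ)).const_mul (c * ‖w‖))
    simpa [← hw, real_inner_self_eq_norm_sq] using h
  have hmin : IsLocalMinOn (fun s : ℝ => √(g (y + s • -w) - m) + c * ‖w‖ * s) (Set.Ici 0) 0 := by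
    refine eventually_mem_nhdsWithin.mono fun s hs => ?_
    have h := hslope (y + s • -w)
    rw [add_sub_cancel_left, norm_smul, norm_neg, Real.norm_of_nonneg hs] at h
    simp only [zero_smul, add_zero, mul_zero]
    linarith
  have hnonneg : 0 ≤ -‖w‖ ^ 2 / (2 * √(g y - m)) + c * ‖w‖ := by
    have h := hmin.hasFDerivWithinAt_nonneg hder.hasFDerivAt.hasFDerivWithinAt
      (y := 1) (mem_posTangentConeAt_of_segment_subset (by
        rw [zero_add, segment_eq_Icc zero_le_one]
        exact Set.Icc_subset_Ici_self))
    simpa using h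
  have hsq : ‖w‖ ^ 2 ≤ ‖w‖ * (2 * c * √(g y - m)) := by
    rw [neg_div, le_neg_add_iff_add_le, add_zero, div_le_iff₀ (by positivity)] at hnonneg
    linarith
  rcases (norm_nonneg w).eq_or_lt with h0 | h0
  · rw [← h0]; positivity
  · rw [pow_two] at hsq
    exact le_of_mul_le_mul_left hsq h0

/-- The Polyak–Łojasiewicz inequality implies quadratic growth. -/
lemma quadratic_growth_of_pl [ProperSpace E] {g : E → ℝ} (hg : Differentiable ℝ g) {m μ : ℝ}
    (hμ : 0 < μ) (hm : ∀ y, m ≤ g y) (hPL : ∀ y, 2 * μ * (g y - m) ≤ ‖gradient g y‖ ^ 2)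
    {x : E} {r : ℝ} (hr : 0 ≤ r) (hdist : ∀ y, g y = m → r ≤ ‖y - x‖) :
    μ / 2 * r ^ 2 ≤ g x - m := by
  have hlin : ∀ c, 0 < c → c < √(μ / 2) → c * r ≤ √(g x - m) := by
    intro c hc hcμ
    have hcont : Continuous fun y => √(g y - m) + c * ‖y - x‖ := by
      have := hg.continuous
      fun_prop
    have hcoer : Filter.Tendsto (fun y => √(g y - m) + c * ‖y - x‖)
        (Filter.cocompact E) Filter.atTop := by
      refine Filter.tendsto_atTop_mono (fun y => le_add_of_nonneg_left (Real.sqrt_nonneg _)) ?_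
      simpa only [dist_eq_norm] using
        (tendsto_dist_right_cocompact_atTop x).const_mul_atTop hc
    obtain ⟨y, hy⟩ := hcont.exists_forall_le hcoer
    have hyx : √(g y - m) + c * ‖y - x‖ ≤ √(g x - m) := by simpa using hy x
    rcases (hm y).eq_or_lt with hmy | hmy
    · have := mul_le_mul_of_nonneg_left (hdist y hmy.symm) hc.le
      linarith [Real.sqrt_nonneg (g y - m)]
    · exfalso
      have hgrad := norm_gradient_le_of_sqrt_slope_le hg hmy hc.le fun z => by
        have htri := norm_sub_le_norm_sub_add_norm_sub z y x
        linarith [hy z, mul_le_mul_of_nonneg_left htri hc.le]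
      have hsq := pow_le_pow_left₀ (norm_nonneg _) hgrad 2
      rw [mul_pow, Real.sq_sqrt (sub_pos.2 hmy).le] at hsq
      have hc2 : c ^ 2 < μ / 2 := (Real.lt_sqrt hc.le).1 hcμ
      nlinarith [hPL y, mul_pos (sub_pos.2 hmy) (sub_pos.2 hc2)]
  have hlim : √(μ / 2) * r ≤ √(g x - m) := by
    have hs : 0 < √(μ / 2) := Real.sqrt_pos.2 (by positivity)
    refine le_of_tendsto (x := nhdsWithin √(μ / 2) (Set.Iio √(μ / 2))) (f := fun c => c * r)
      ((continuous_id.mul continuous_const).continuousAt.tendsto.mono_left nhdsWithin_le_nhds) ?_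
    filter_upwards [Ioo_mem_nhdsLT hs] with c hc using hlin c hc.1 hc.2
  have hsq := pow_le_pow_left₀ (by positivity) hlim 2
  rwa [mul_pow, Real.sq_sqrt (by positivity), Real.sq_sqrt (sub_nonneg.2 (hm x))] at hsq

end Helpers

/-- **Proposition (relations between PL, SC, RSI, EB, QG).**
For a differentiable `g : ℝ^d → ℝ` with nonempty closed optimal set `X* = argmin g`, and
`proj x` a projection of `x` onto `X*`:
(1) `μ`-strong convexity implies `μ`-PL and `μ`-RSI;
(2) `μ`-PL implies `μ`-QG and `μ`-EB;
(3) `μ`-RSI implies `μ`-EB;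
(4) `μ`-EB together with `L`-smoothness implies `(μ²/L)`-PL. -/
theorem pl_sc_rsi_eb_qg_implications
    (d : ℕ) (g : EuclideanSpace ℝ (Fin d) → ℝ)
    (hdiff : Differentiable ℝ g)
    (Xs : Set (EuclideanSpace ℝ (Fin d)))
    (hXs : Xs = {x | ∀ y, g x ≤ g y})
    (hXsne : Xs.Nonempty)
    (hXscl : IsClosed Xs)
    (proj : EuclideanSpace ℝ (Fin d) → EuclideanSpace ℝ (Fin d))
    (hproj : ∀ x, proj x ∈ Xs ∧ ∀ w ∈ Xs, ‖x - proj x‖ ≤ ‖x - w‖)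
    (μ : ℝ) (hμ : 0 < μ) :
    -- (1) SC → PL ∧ RSI
    ((∀ x x', g x + ⟪gradient g x, x' - x⟫ + μ / 2 * ‖x' - x‖ ^ 2 ≤ g x') →
      ((∀ xs ∈ Xs, ∀ x, 2 * μ * (g x - g xs) ≤ ‖gradient g x‖ ^ 2) ∧
       (∀ x, μ * ‖proj x - x‖ ^ 2 ≤ ⟪gradient g x, x - proj x⟫))) ∧
    -- (2) PL → QG ∧ EB
    ((∀ xs ∈ Xs, ∀ x, 2 * μ * (g x - g xs) ≤ ‖gradient g x‖ ^ 2) →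
      ((∀ xs ∈ Xs, ∀ x, μ / 2 * ‖proj x - x‖ ^ 2 ≤ g x - g xs) ∧
       (∀ x, μ * ‖proj x - x‖ ≤ ‖gradient g x‖))) ∧
    -- (3) RSI → EB
    ((∀ x, μ * ‖proj x - x‖ ^ 2 ≤ ⟪gradient g x, x - proj x⟫) →
      (∀ x, μ * ‖proj x - x‖ ≤ ‖gradient g x‖)) ∧
    -- (4) EB ∧ L-smooth → (μ²/L)-PL
    (∀ L : ℝ, 0 < L →
      (∀ x y, ‖gradient g x - gradient g y‖ ≤ L * ‖x - y‖) →
      (∀ x, μ * ‖proj x - x‖ ≤ ‖gradient g x‖) →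
      ∀ xs ∈ Xs, ∀ x, 2 * (μ ^ 2 / L) * (g x - g xs) ≤ ‖gradient g x‖ ^ 2) := by
  subst hXs
  have hgeq : ∀ xs ∈ {x | ∀ y, g x ≤ g y}, ∀ x, g xs = g (proj x) := fun xs hxs x =>
    le_antisymm (hxs _) ((hproj x).1 _)
  have hQG : (∀ xs ∈ {x | ∀ y, g x ≤ g y}, ∀ x, 2 * μ * (g x - g xs) ≤ ‖gradient g x‖ ^ 2) →
      ∀ xs ∈ {x | ∀ y, g x ≤ g y}, ∀ x, μ / 2 * ‖proj x - x‖ ^ 2 ≤ g x - g xs := by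
    intro hPL xs hxs x
    refine quadratic_growth_of_pl hdiff hμ hxs (hPL xs hxs) (norm_nonneg _) fun y hy => ?_
    rw [norm_sub_rev, norm_sub_rev y]
    exact (hproj x).2 y fun z => hy.trans_le (hxs z)
  refine ⟨fun hSC => ⟨fun xs _ x => ?_, fun x => ?_⟩, fun hPL => ⟨hQG hPL, fun x => ?_⟩,
    fun hRSI x => ?_, fun L hL hsmooth hEB xs hxs x => ?_⟩
  · have hsc := hSC x xs
    have hcs := neg_le_of_abs_le (abs_real_inner_le_norm (gradient g x) (xs - x))
    nlinarith [sq_nonneg (‖gradient g x‖ - μ * ‖xs - x‖)]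
  · have h₁ := hSC x (proj x)
    have h₂ := hSC (proj x) x
    rw [gradient_eq_zero_of_forall_le (hproj x).1, inner_zero_left, norm_sub_rev] at h₂
    rw [← neg_sub (proj x) x, inner_neg_right]
    linarith
  · have h₁ := hPL _ (hproj x).1 x
    have h₂ := hQG hPL _ (hproj x).1 x
    refine (sq_le_sq₀ (by positivity) (norm_nonneg _)).1 ?_
    nlinarith
  · have hcs := real_inner_le_norm (gradient g x) (x - proj x)
    rw [norm_sub_rev x] at hcs
    rcases (norm_nonneg (proj x - x)).eq_or_lt with h0 | h0
    · rw [← h0, mul_zero]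
      exact norm_nonneg _
    · refine le_of_mul_le_mul_right ?_ h0
      linarith [hRSI x]
  · have hdesc := le_add_sq_of_gradient_eq_zero hdiff hsmooth
      (gradient_eq_zero_of_forall_le (hproj x).1) x
    rw [norm_sub_rev, ← hgeq xs hxs x] at hdesc
    calc 2 * (μ ^ 2 / L) * (g x - g xs)
        ≤ 2 * (μ ^ 2 / L) * (L / 2 * ‖proj x - x‖ ^ 2) := by gcongr; linarith
      _ = (μ * ‖proj x - x‖) ^ 2 := by field_simp
      _ ≤ ‖gradient g x‖ ^ 2 := by gcongr; exact hEB x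
end

section
/- Let g : ℝ^{d_x} × ℝ^{d_y} → ℝ be L-smooth, suppose that for each fixed x the function −g(x;·) is μ₂-PL (i.e., ‖∇₂g(x;y)‖² ≥ 2μ₂(Φ(x) − g(x;y)) where Φ(x) := max_{y'} g(x;y')), and that for each x the set Y*_x := argmax_{y'} g(x;y') is nonempty and closed; let κ₂ := L/μ₂. Then for any x₀, x₁ and any y₀* ∈ Y*_{x₀}, every projection y₁* of y₀* onto the set Y*_{x₁} satisfies ‖y₀* − y₁*‖ ≤ κ₂‖x₀ − x₁‖. In particular, for every y₀* ∈ Y*_{x₀} there exists y₁* ∈ Y*_{x₁} with ‖y₀* − y₁*‖ ≤ κ₂‖x₀ − x₁‖. -/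
open Filter Topology

/-- If `h` has gradient `v` at `z` and `h z ≤ h w + c * ‖w - z‖` for all `w`, then `‖v‖ ≤ c`. -/
lemma norm_gradient_le_of_forall_le_add {E : Type*} [NormedAddCommGroup E]
    [InnerProductSpace ℝ E] [CompleteSpace E] {h : E → ℝ} {v z : E} {c : ℝ} (hc : 0 ≤ c)
    (hv : HasGradientAt h v z) (hmin : ∀ w, h z ≤ h w + c * ‖w - z‖) : ‖v‖ ≤ c := by
  have hline : HasDerivAt (fun t : ℝ => z + t • (-v)) (-v) 0 := by
    simpa using ((hasDerivAt_id (0 : ℝ)).smul_const (-v)).const_add z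
  have hfd : HasFDerivAt h (InnerProductSpace.toDual ℝ E v) (z + (0 : ℝ) • (-v)) := by
    simpa using hv.hasFDerivAt
  have hcomp : HasDerivAt (fun t : ℝ => h (z + t • (-v))) (-(‖v‖ ^ 2)) 0 := by
    simpa [Function.comp_def, real_inner_self_eq_norm_sq] using hfd.comp_hasDerivAt 0 hline
  have hslope := (hasDerivWithinAt_iff_tendsto_slope' (s := Set.Ioi 0) (by simp)).1
    hcomp.hasDerivWithinAt
  have hbound : -(c * ‖v‖) ≤ -(‖v‖ ^ 2) := by
    refine ge_of_tendsto hslope ?_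
    filter_upwards [self_mem_nhdsWithin] with t ht
    have ht : 0 < t := ht
    have hm := hmin (z + t • (-v))
    rw [add_sub_cancel_left, norm_smul, norm_neg, Real.norm_of_nonneg ht.le] at hm
    rw [slope_def_field, le_div_iff₀ (by simpa using ht)]
    simp only [zero_smul, add_zero, sub_zero]
    nlinarith
  by_contra! hlt
  nlinarith [norm_nonneg v]

/-- Error bound for the square root of a nonnegative function satisfying the
Polyak–Łojasiewicz inequality, for any rate below `√(μ / 2)`. -/
lemma exists_zero_mul_norm_sub_le_sqrt_of_pl {E : Type*} [NormedAddCommGroup E]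
    [InnerProductSpace ℝ E] [FiniteDimensional ℝ E] {f : E → ℝ} {G : E → E} {μ c : ℝ}
    (hf : ∀ y, 0 ≤ f y) (hG : ∀ y, HasGradientAt f (G y) y)
    (hPL : ∀ y, 2 * μ * f y ≤ ‖G y‖ ^ 2) (hc : 0 < c) (hcμ : 2 * c ^ 2 < μ) (y : E) :
    ∃ z, f z = 0 ∧ c * ‖z - y‖ ≤ √(f y) := by
  have hcont : Continuous f :=
    continuous_iff_continuousAt.2 fun y => (hG y).hasFDerivAt.continuousAt
  have hk : Continuous fun z => √(f z) + c * ‖z - y‖ := by fun_prop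
  have hlim : Tendsto (fun z => √(f z) + c * ‖z - y‖) (cocompact E) atTop := by
    refine tendsto_atTop_mono (fun z => le_add_of_nonneg_left (Real.sqrt_nonneg _)) ?_
    simpa [dist_eq_norm] using (tendsto_dist_right_cocompact_atTop y).const_mul_atTop hc
  obtain ⟨z, hz⟩ := hk.exists_forall_le hlim
  refine ⟨z, ?_, ?_⟩
  · by_contra hne
    have hpos : 0 < f z := lt_of_le_of_ne (hf z) (Ne.symm hne)
    have hsq : 0 < √(f z) := Real.sqrt_pos.2 hpos
    have hgrad : HasGradientAt (fun z => √(f z)) ((1 / (2 * √(f z))) • G z) z := by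
      rw [hasGradientAt_iff_hasFDerivAt, map_smul]
      exact (hG z).hasFDerivAt.sqrt hne
    have hle := norm_gradient_le_of_forall_le_add hc.le hgrad fun w => by
      have := hz w
      have := norm_sub_le_norm_sub_add_norm_sub w z y
      nlinarith
    rw [norm_smul, Real.norm_of_nonneg (by positivity), one_div, inv_mul_le_iff₀ (by positivity)]
      at hle
    have h2 : ‖G z‖ ^ 2 ≤ (2 * √(f z) * c) ^ 2 := by gcongr
    have h3 := hPL z
    have h4 := Real.sq_sqrt hpos.le
    rw [show (2 * √(f z) * c) ^ 2 = 4 * c ^ 2 * √(f z) ^ 2 by ring, h4] at h2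
    nlinarith
  · have := hz y
    simp only [sub_self, norm_zero, mul_zero, add_zero] at this
    linarith [Real.sqrt_nonneg (f z)]

/-- A nonnegative function satisfying the Polyak–Łojasiewicz inequality has quadratic growth
away from any nearest zero. -/
lemma quadratic_growth_of_pl_s11 {E : Type*} [NormedAddCommGroup E]
    [InnerProductSpace ℝ E] [FiniteDimensional ℝ E] {f : E → ℝ} {G : E → E} {μ : ℝ} (hμ : 0 < μ)
    (hf : ∀ y, 0 ≤ f y) (hG : ∀ y, HasGradientAt f (G y) y)
    (hPL : ∀ y, 2 * μ * f y ≤ ‖G y‖ ^ 2) {y p : E}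
    (hp : ∀ w, f w = 0 → ‖y - p‖ ≤ ‖y - w‖) : μ / 2 * ‖y - p‖ ^ 2 ≤ f y := by
  have hpos : 0 < √(μ / 2) := by positivity
  have hlin : √(μ / 2) * ‖y - p‖ ≤ √(f y) := by
    refine le_of_tendsto (x := 𝓝[<] √(μ / 2)) (f := fun c => c * ‖y - p‖)
      ((continuous_id.mul continuous_const).continuousAt.tendsto.mono_left nhdsWithin_le_nhds) ?_
    filter_upwards [Ioo_mem_nhdsLT hpos] with c hc
    have hcμ : c ^ 2 < μ / 2 := (Real.lt_sqrt hc.1.le).1 hc.2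
    obtain ⟨z, hz, hle⟩ := exists_zero_mul_norm_sub_le_sqrt_of_pl hf hG hPL hc.1 (by linarith) y
    rw [norm_sub_rev] at hle
    exact (mul_le_mul_of_nonneg_left (hp z hz) hc.1.le).trans hle
  have hsq := pow_le_pow_left₀ (by positivity) hlin 2
  rwa [mul_pow, Real.sq_sqrt (by positivity), Real.sq_sqrt (hf y)] at hsq

/-- **Proposition (Lipschitz-continuity-like property of `y*(x)`).**
Let `g : ℝ^{dx} × ℝ^{dy} → ℝ` be `L`-smooth (jointly, expressed through its partial gradients
`g1`, `g2`), suppose `−g(x;·)` is `μ₂`-PL for each `x`, and suppose the argmax sets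
`Y*_x = {y | g x y = Φ x}` are nonempty and closed.  Then for any `x₀, x₁` and any
`y₀* ∈ Y*_{x₀}`, every projection `y₁*` of `y₀*` onto `Y*_{x₁}` satisfies
`‖y₀* − y₁*‖ ≤ (L/μ₂)‖x₀ − x₁‖`; in particular such a `y₁* ∈ Y*_{x₁}` exists. -/
theorem argmax_selection_lipschitz
    (dx dy : ℕ) (L μ2 : ℝ) (hL : 0 < L) (hμ2 : 0 < μ2)
    (g : EuclideanSpace ℝ (Fin dx) → EuclideanSpace ℝ (Fin dy) → ℝ)
    (g1 : EuclideanSpace ℝ (Fin dx) → EuclideanSpace ℝ (Fin dy) → EuclideanSpace ℝ (Fin dx))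
    (g2 : EuclideanSpace ℝ (Fin dx) → EuclideanSpace ℝ (Fin dy) → EuclideanSpace ℝ (Fin dy))
    (hg1 : ∀ x y, HasGradientAt (fun x' => g x' y) (g1 x y) x)
    (hg2 : ∀ x y, HasGradientAt (fun y' => g x y') (g2 x y) y)
    (hsmooth : ∀ x y x' y',
      ‖g1 x y - g1 x' y'‖ ^ 2 + ‖g2 x y - g2 x' y'‖ ^ 2 ≤ L ^ 2 * (‖x - x'‖ ^ 2 + ‖y - y'‖ ^ 2))
    (Φ : EuclideanSpace ℝ (Fin dx) → ℝ)
    (hΦ : ∀ x, IsGreatest (Set.range (g x)) (Φ x))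
    (hYcl : ∀ x, IsClosed {y | g x y = Φ x})
    (hPL2 : ∀ x y, 2 * μ2 * (Φ x - g x y) ≤ ‖g2 x y‖ ^ 2) :
    ∀ x0 x1 y0s, g x0 y0s = Φ x0 →
      ((∀ y1s, g x1 y1s = Φ x1 → (∀ w, g x1 w = Φ x1 → ‖y0s - y1s‖ ≤ ‖y0s - w‖) →
          ‖y0s - y1s‖ ≤ (L / μ2) * ‖x0 - x1‖) ∧
       (∃ y1s, g x1 y1s = Φ x1 ∧ ‖y0s - y1s‖ ≤ (L / μ2) * ‖x0 - x1‖)) := by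
  intro x0 x1 y0s hy0
  have key : ∀ y1s, (∀ w, g x1 w = Φ x1 → ‖y0s - y1s‖ ≤ ‖y0s - w‖) →
      ‖y0s - y1s‖ ≤ (L / μ2) * ‖x0 - x1‖ := by
    intro y1s hproj
    have hle : ∀ x y, g x y ≤ Φ x := fun x y => (hΦ x).2 ⟨y, rfl⟩
    have hgrad : ∀ y, HasGradientAt (fun y => Φ x1 - g x1 y) (-g2 x1 y) y := fun y => by
      rw [hasGradientAt_iff_hasFDerivAt, map_neg]
      exact (hg2 x1 y).hasFDerivAt.const_sub _
    have hqg := quadratic_growth_of_pl_s11 hμ2 (fun y => sub_nonneg.2 (hle x1 y)) hgrad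
      (fun y => by simpa using hPL2 x1 y) (y := y0s) (p := y1s)
      (fun w hw => hproj w (sub_eq_zero.1 hw).symm)
    have hcrit : g2 x0 y0s = 0 := by
      have hmax : IsLocalMax (g x0) y0s := Eventually.of_forall fun y => hy0 ▸ hle x0 y
      simpa using hmax.hasFDerivAt_eq_zero (hg2 x0 y0s).hasFDerivAt
    have hs := hsmooth x1 y0s x0 y0s
    rw [hcrit, sub_zero, sub_self, norm_zero, norm_sub_rev x1 x0] at hs
    have hpl := hPL2 x1 y0s
    have hsq : (μ2 * ‖y0s - y1s‖) ^ 2 ≤ (L * ‖x0 - x1‖) ^ 2 := by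
      nlinarith [sq_nonneg ‖g1 x1 y0s - g1 x0 y0s‖]
    have := (sq_le_sq₀ (by positivity) (by positivity)).1 hsq
    rw [div_mul_eq_mul_div, le_div_iff₀ hμ2]
    linarith
  refine ⟨fun y1s _ hproj => key y1s hproj, ?_⟩
  obtain ⟨y, hy⟩ := (hΦ x1).1
  obtain ⟨p, hp, hdist⟩ := (hYcl x1).exists_infDist_eq_dist ⟨y, hy⟩ y0s
  refine ⟨p, hp, key p fun w hw => ?_⟩
  rw [← dist_eq_norm, ← dist_eq_norm, ← hdist]
  exact Metric.infDist_le_dist_of_mem hw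
end

section
/- Let g : ℝ^{d_x} × ℝ^{d_y} → ℝ be L-smooth, suppose that for each fixed x the function −g(x;·) is μ₂-PL (i.e., ‖∇₂g(x;y)‖² ≥ 2μ₂(Φ(x) − g(x;y)) where Φ(x) := max_{y'} g(x;y')), and that for each x the set Y*_x := argmax_{y'} g(x;y') is nonempty and closed; let κ₂ := L/μ₂. Then Φ is differentiable with ∇Φ(x) = ∇₁g(x; y*(x)) for every choice of y*(x) ∈ Y*_x, and Φ is L(κ₂+1)-smooth (its gradient is L(κ₂+1)-Lipschitz). -/
open Filter Topology

/-- If `√f` decreases no faster than `c ‖y - z‖` away from `z`, then `‖∇f z‖ ≤ 2 c √(f z)`. -/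
lemma norm_gradient_le_of_sqrt_slope {E : Type*} [NormedAddCommGroup E] [InnerProductSpace ℝ E]
    [CompleteSpace E] {f : E → ℝ} {v z : E} {c : ℝ} (hc : 0 ≤ c)
    (hf : HasGradientAt f v z) (hz : 0 < f z)
    (hslope : ∀ y, √(f z) - c * ‖y - z‖ ≤ √(f y)) : ‖v‖ ≤ 2 * c * √(f z) := by
  have hline : HasDerivAt (fun t : ℝ => z - t • v) (-v) 0 := by
    simpa using ((hasDerivAt_id (0 : ℝ)).smul_const v).const_sub z
  have hfz : HasFDerivAt f (InnerProductSpace.toDual ℝ E v) (z - (0 : ℝ) • v) := by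
    simpa using hf.hasFDerivAt
  have hcomp := (hfz.comp_hasDerivAt (0 : ℝ) hline).sqrt (by simpa using hz.ne')
  have hlim := hcomp.tendsto_slope_zero_right
  have hs : 0 < √(f z) := Real.sqrt_pos.2 hz
  have hle : -(c * ‖v‖) ≤ -‖v‖ ^ 2 / (2 * √(f z)) := by
    have hge := ge_of_tendsto (b := -(c * ‖v‖)) hlim ?_
    · simpa using hge
    · filter_upwards [self_mem_nhdsWithin] with t (ht : 0 < t)
      have h := hslope (z - t • v)
      have hn : ‖z - t • v - z‖ = t * ‖v‖ := by
        rw [sub_sub_cancel_left, norm_neg, norm_smul, Real.norm_of_nonneg ht.le]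
      rw [hn] at h
      simp only [Function.comp_apply, zero_add, zero_smul, sub_zero, smul_eq_mul]
      rw [inv_mul_eq_div, le_div_iff₀ ht]
      linarith
  rw [le_div_iff₀ (by positivity)] at hle
  rcases (norm_nonneg v).eq_or_lt with hv | hv
  · rw [← hv]
    positivity
  · nlinarith

/-- A nonnegative Polyak–Łojasiewicz function grows quadratically away from its zero set. -/
lemma exists_zero_mul_sq_le_of_PL {E : Type*} [NormedAddCommGroup E] [InnerProductSpace ℝ E]
    [ProperSpace E] [CompleteSpace E] {f : E → ℝ} {f' : E → E} {μ ν : ℝ}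
    (hf : ∀ y, HasGradientAt f (f' y) y) (hf0 : ∀ y, 0 ≤ f y)
    (hPL : ∀ y, 2 * μ * f y ≤ ‖f' y‖ ^ 2) (hν : 0 < ν) (hνμ : ν < μ) (y₀ : E) :
    ∃ z, f z = 0 ∧ ν * ‖z - y₀‖ ^ 2 ≤ 2 * f y₀ := by
  set c := √(ν / 2) with hc
  have hc0 : 0 < c := Real.sqrt_pos.2 (by positivity)
  have hcsq : c ^ 2 = ν / 2 := Real.sq_sqrt (by positivity)
  have hcont : Continuous fun y => √(f y) + c * ‖y - y₀‖ := by
    have : Continuous f := continuous_iff_continuousAt.2 fun y => (hf y).continuousAt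
    fun_prop
  have hcoercive : Tendsto (fun y => √(f y) + c * ‖y - y₀‖) (cocompact E) atTop := by
    refine tendsto_atTop_mono (f := fun y => c * dist y y₀) (fun y => ?_)
      ((tendsto_dist_right_cocompact_atTop y₀).const_mul_atTop hc0)
    rw [dist_eq_norm]
    linarith [Real.sqrt_nonneg (f y)]
  obtain ⟨z, hz⟩ := hcont.exists_forall_le hcoercive
  refine ⟨z, ?_, ?_⟩
  · by_contra hne
    have hpos : 0 < f z := (hf0 z).lt_of_ne' hne
    have hv := norm_gradient_le_of_sqrt_slope hc0.le (hf z) hpos fun y => by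
      have htri : ‖y - y₀‖ ≤ ‖y - z‖ + ‖z - y₀‖ := norm_sub_le_norm_sub_add_norm_sub y z y₀
      nlinarith [hz y]
    have hsq : ‖f' z‖ ^ 2 ≤ 2 * ν * f z := by
      calc ‖f' z‖ ^ 2 ≤ (2 * c * √(f z)) ^ 2 := by gcongr
        _ = 2 * ν * f z := by rw [mul_pow, mul_pow, hcsq, Real.sq_sqrt hpos.le]; ring
    nlinarith [hPL z]
  · have hle : c * ‖z - y₀‖ ≤ √(f y₀) := by
      have h := hz y₀
      simp only [sub_self, norm_zero, mul_zero, add_zero] at h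
      linarith [Real.sqrt_nonneg (f z)]
    have hsq : (c * ‖z - y₀‖) ^ 2 ≤ f y₀ := by
      calc (c * ‖z - y₀‖) ^ 2 ≤ √(f y₀) ^ 2 := by gcongr
        _ = f y₀ := Real.sq_sqrt (hf0 y₀)
    rw [mul_pow, hcsq] at hsq
    linarith

/-- First-order Taylor estimate for a function with Lipschitz gradient. -/
lemma abs_sub_sub_inner_gradient_le {E : Type*} [NormedAddCommGroup E] [InnerProductSpace ℝ E]
    [CompleteSpace E] {f : E → ℝ} {f' : E → E} {L : ℝ} (hL : 0 ≤ L)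
    (hf : ∀ x, HasGradientAt f (f' x) x) (hlip : ∀ x y, ‖f' x - f' y‖ ≤ L * ‖x - y‖) (x y : E) :
    |f y - f x - inner ℝ (f' x) (y - x)| ≤ L * ‖y - x‖ ^ 2 := by
  have h := (convex_segment x y).norm_image_sub_le_of_norm_hasFDerivWithin_le' (f := f)
    (f' := fun z => InnerProductSpace.toDual ℝ E (f' z)) (φ := InnerProductSpace.toDual ℝ E (f' x))
    (C := L * ‖y - x‖) (fun z _ => (hf z).hasFDerivAt.hasFDerivWithinAt) (fun z hz => ?_)
    (left_mem_segment ℝ x y) (right_mem_segment ℝ x y)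
  · rw [InnerProductSpace.toDual_apply_apply, Real.norm_eq_abs] at h
    linarith
  · rw [← map_sub, LinearIsometryEquiv.norm_map]
    exact (hlip z x).trans (by gcongr; exact norm_sub_le_of_mem_segment hz)

/-- A function with a first-order expansion up to a quadratic error has a gradient. -/
lemma hasGradientAt_of_abs_sub_le_sq {E : Type*} [NormedAddCommGroup E] [InnerProductSpace ℝ E]
    [CompleteSpace E] {f : E → ℝ} {v x : E} {C : ℝ}
    (h : ∀ y, |f y - f x - inner ℝ v (y - x)| ≤ C * ‖y - x‖ ^ 2) : HasGradientAt f v x := by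
  rw [hasGradientAt_iff_isLittleO]
  have hO : (fun y => f y - f x - inner ℝ v (y - x)) =O[𝓝 x] fun y => ‖y - x‖ ^ 2 :=
    Asymptotics.IsBigO.of_bound C <| Eventually.of_forall fun y => by simpa using h y
  exact hO.trans_isLittleO (Asymptotics.isLittleO_pow_sub_sub x one_lt_two)

/-- **Proposition (smoothness of the primal function).**
Let `g : ℝ^{dx} × ℝ^{dy} → ℝ` be `L`-smooth (through partial gradients `g1`, `g2`),
with `−g(x;·)` `μ₂`-PL for each `x` and argmax sets nonempty and closed.  Then
`Φ(x) = max_{y'} g(x;y')` is differentiable with `∇Φ(x) = ∇₁g(x; y*(x))` for every choice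
of `y*(x) ∈ argmax g(x;·)`, and `Φ` is `L(κ₂+1)`-smooth with `κ₂ = L/μ₂`. -/
theorem primal_function_smooth
    (dx dy : ℕ) (L μ2 : ℝ) (hL : 0 < L) (hμ2 : 0 < μ2)
    (g : EuclideanSpace ℝ (Fin dx) → EuclideanSpace ℝ (Fin dy) → ℝ)
    (g1 : EuclideanSpace ℝ (Fin dx) → EuclideanSpace ℝ (Fin dy) → EuclideanSpace ℝ (Fin dx))
    (g2 : EuclideanSpace ℝ (Fin dx) → EuclideanSpace ℝ (Fin dy) → EuclideanSpace ℝ (Fin dy))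
    (hg1 : ∀ x y, HasGradientAt (fun x' => g x' y) (g1 x y) x)
    (hg2 : ∀ x y, HasGradientAt (fun y' => g x y') (g2 x y) y)
    (hsmooth : ∀ x y x' y',
      ‖g1 x y - g1 x' y'‖ ^ 2 + ‖g2 x y - g2 x' y'‖ ^ 2 ≤ L ^ 2 * (‖x - x'‖ ^ 2 + ‖y - y'‖ ^ 2))
    (Φ : EuclideanSpace ℝ (Fin dx) → ℝ)
    (hΦ : ∀ x, IsGreatest (Set.range (g x)) (Φ x))
    (hYcl : ∀ x, IsClosed {y | g x y = Φ x})
    (hPL2 : ∀ x y, 2 * μ2 * (Φ x - g x y) ≤ ‖g2 x y‖ ^ 2) :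
    (∀ x ys, g x ys = Φ x → HasGradientAt Φ (g1 x ys) x) ∧
    (∀ x x', ‖gradient Φ x - gradient Φ x'‖ ≤ L * (L / μ2 + 1) * ‖x - x'‖) := by
  have hlip1 : ∀ x y x' y', ‖g1 x y - g1 x' y'‖ ^ 2 ≤ L ^ 2 * (‖x - x'‖ ^ 2 + ‖y - y'‖ ^ 2) :=
    fun x y x' y' => by nlinarith [hsmooth x y x' y', sq_nonneg ‖g2 x y - g2 x' y'‖]
  have hle : ∀ x y, g x y ≤ Φ x := fun x y => (hΦ x).2 ⟨y, rfl⟩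
  have hcrit : ∀ x ys, g x ys = Φ x → g2 x ys = 0 := fun x ys hys => by
    have hmax : IsLocalMax (fun y => g x y) ys :=
      Eventually.of_forall fun y => (hle x y).trans hys.ge
    simpa using hmax.hasFDerivAt_eq_zero (hg2 x ys).hasFDerivAt
  set κ := L / μ2 with hκ
  have hκ0 : 0 < κ := div_pos hL hμ2
  have hLκ : L = κ * μ2 := by rw [hκ]; field_simp
  have hnear : ∀ x ys x', g x ys = Φ x →
      ∃ z, g x' z = Φ x' ∧ ‖ys - z‖ ^ 2 ≤ (κ ^ 2 + 2 * κ) * ‖x - x'‖ ^ 2 := by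
    intro x ys x' hys
    obtain ⟨z, hz, hzd⟩ := exists_zero_mul_sq_le_of_PL (f := fun y => Φ x' - g x' y)
      (f' := fun y => -g2 x' y) (μ := μ2) (ν := κ * μ2 / (κ + 2))
      (fun y => by
        rw [hasGradientAt_iff_hasFDerivAt, map_neg]
        exact (hg2 x' y).hasFDerivAt.const_sub (Φ x'))
      (fun y => sub_nonneg.2 (hle x' y)) (fun y => by simpa using hPL2 x' y) (by positivity)
      (by rw [div_lt_iff₀ (by positivity)]; nlinarith) ys
    refine ⟨z, (sub_eq_zero.1 hz).symm, ?_⟩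
    have hgrad : ‖g2 x' ys‖ ^ 2 ≤ L ^ 2 * ‖x - x'‖ ^ 2 := by
      have h := hsmooth x ys x' ys
      rw [hcrit x ys hys, zero_sub, norm_neg, sub_self, norm_zero] at h
      nlinarith [sq_nonneg ‖g1 x ys - g1 x' ys‖]
    have hPL := hPL2 x' ys
    rw [norm_sub_rev ys z]
    have hkey : κ * μ2 ^ 2 * ‖z - ys‖ ^ 2 ≤ κ * μ2 ^ 2 * ((κ ^ 2 + 2 * κ) * ‖x - x'‖ ^ 2) := by
      calc κ * μ2 ^ 2 * ‖z - ys‖ ^ 2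
          = (κ + 2) * μ2 * (κ * μ2 / (κ + 2) * ‖z - ys‖ ^ 2) := by field_simp
        _ ≤ (κ + 2) * μ2 * (2 * (Φ x' - g x' ys)) := by gcongr
        _ = (κ + 2) * (2 * μ2 * (Φ x' - g x' ys)) := by ring
        _ ≤ (κ + 2) * (L ^ 2 * ‖x - x'‖ ^ 2) := mul_le_mul_of_nonneg_left (hPL.trans hgrad) (by positivity)
        _ = κ * μ2 ^ 2 * ((κ ^ 2 + 2 * κ) * ‖x - x'‖ ^ 2) := by rw [hLκ]; ring
    exact le_of_mul_le_mul_left hkey (by positivity)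
  have htaylor : ∀ x x' y, |g x' y - g x y - inner ℝ (g1 x y) (x' - x)| ≤ L * ‖x' - x‖ ^ 2 :=
    fun x x' y => abs_sub_sub_inner_gradient_le (f := fun x => g x y) hL.le (fun x => hg1 x y)
      (fun a b => (sq_le_sq₀ (norm_nonneg _) (by positivity)).1
        (by simpa [mul_pow] using hlip1 a y b y)) x x'
  have hdist : ∀ (x x' : EuclideanSpace ℝ (Fin dx)) (y z : EuclideanSpace ℝ (Fin dy)),
      ‖y - z‖ ^ 2 ≤ (κ ^ 2 + 2 * κ) * ‖x - x'‖ ^ 2 →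
      ∀ w w', ‖w - w'‖ ≤ ‖x - x'‖ → ‖g1 w y - g1 w' z‖ ≤ L * (κ + 1) * ‖x - x'‖ := by
    intro x x' y z hyz w w' hw
    refine (sq_le_sq₀ (norm_nonneg _) (by positivity)).1 ?_
    calc ‖g1 w y - g1 w' z‖ ^ 2 ≤ L ^ 2 * (‖w - w'‖ ^ 2 + ‖y - z‖ ^ 2) := hlip1 w y w' z
      _ ≤ L ^ 2 * (‖x - x'‖ ^ 2 + (κ ^ 2 + 2 * κ) * ‖x - x'‖ ^ 2) := by gcongr
      _ = (L * (κ + 1) * ‖x - x'‖) ^ 2 := by ring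
  have hgradΦ : ∀ x ys, g x ys = Φ x → HasGradientAt Φ (g1 x ys) x := by
    intro x ys hys
    refine hasGradientAt_of_abs_sub_le_sq (C := L + L * (κ + 1)) fun x' => ?_
    obtain ⟨z, hz, hzd⟩ := hnear x ys x' hys
    have hinner : inner ℝ (g1 x z - g1 x ys) (x' - x) ≤ L * (κ + 1) * ‖x' - x‖ ^ 2 := by
      have h := hdist x x' ys z hzd x x (by simp)
      rw [norm_sub_rev, norm_sub_rev x x'] at h
      calc inner ℝ (g1 x z - g1 x ys) (x' - x) ≤ ‖g1 x z - g1 x ys‖ * ‖x' - x‖ :=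
            real_inner_le_norm _ _
        _ ≤ L * (κ + 1) * ‖x' - x‖ * ‖x' - x‖ := by gcongr
        _ = L * (κ + 1) * ‖x' - x‖ ^ 2 := by ring
    rw [inner_sub_left] at hinner
    have hlow := (abs_le.1 (htaylor x x' ys)).1
    have hup := (abs_le.1 (htaylor x x' z)).2
    have hnonneg : 0 ≤ L * (κ + 1) * ‖x' - x‖ ^ 2 := by positivity
    rw [abs_le]
    constructor
    · linarith [hle x' ys]
    · linarith [hle x z]
  refine ⟨hgradΦ, fun x x' => ?_⟩
  obtain ⟨ys, hys⟩ := (hΦ x).1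
  obtain ⟨z, hz, hzd⟩ := hnear x ys x' hys
  rw [(hgradΦ x ys hys).gradient, (hgradΦ x' z hz).gradient]
  exact hdist x x' ys z hzd x x' le_rfl
end

section
/- Let g : ℝ^{d_x} × ℝ^{d_y} → ℝ be L-smooth and two-sided PL with constants μ₁ and μ₂: for each fixed y, g(·;y) is μ₁-PL (i.e., ‖∇₁g(x;y)‖² ≥ 2μ₁(g(x;y) − min_{x'} g(x';y))), and for each fixed x, −g(x;·) is μ₂-PL (i.e., ‖∇₂g(x;y)‖² ≥ 2μ₂(Φ(x) − g(x;y))), where Φ(x) := max_{y'} g(x;y') is well-defined with Y*_x nonempty and closed and Φ* := inf_x Φ(x) > −∞. Then g satisfies the primal PL condition: ‖∇Φ(x)‖² ≥ 2μ₁(Φ(x) − Φ*) for every x. -/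
/-- A function that touches a differentiable function `f` at `x` and differs from it by
`O(‖x' - x‖ ^ 2)` has the same gradient at `x`. -/
theorem HasGradientAt.of_abs_sub_le_sq {E : Type*} [NormedAddCommGroup E] [InnerProductSpace ℝ E]
    [CompleteSpace E] {f F : E → ℝ} {f' x : E} (hf : HasGradientAt f f' x) (C : ℝ)
    (hF : ∀ x', |F x' - f x'| ≤ C * ‖x' - x‖ ^ 2) : HasGradientAt F f' x := by
  have hdiff : HasFDerivAt (fun x' => F x' - f x') (0 : E →L[ℝ] ℝ) x := by
    refine Asymptotics.IsBigO.hasFDerivAt (n := 2) ?_ one_lt_two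
    refine Asymptotics.IsBigO.of_bound C (Filter.Eventually.of_forall fun x' => ?_)
    simpa using hF x'
  rw [hasGradientAt_iff_hasFDerivAt] at hf ⊢
  simpa using hdiff.fun_add hf

/-- **Proposition (x-side PL ⇒ primal PL).**
Let `g : ℝ^{dx} × ℝ^{dy} → ℝ` be `L`-smooth and two-sided PL with constants `μ₁`, `μ₂`:
for each fixed `y`, `g(·;y)` is `μ₁`-PL (with minimum value `Ψ y`), and for each fixed `x`,
`−g(x;·)` is `μ₂`-PL.  Then the primal function `Φ(x) = max_{y'} g(x;y')` is `μ₁`-PL: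
`‖∇Φ(x)‖² ≥ 2μ₁(Φ(x) − Φ*)` for every `x`. -/
theorem two_sided_pl_implies_primal_pl
    (dx dy : ℕ) (L μ1 μ2 : ℝ) (hL : 0 < L) (hμ1 : 0 < μ1) (hμ2 : 0 < μ2)
    (g : EuclideanSpace ℝ (Fin dx) → EuclideanSpace ℝ (Fin dy) → ℝ)
    (g1 : EuclideanSpace ℝ (Fin dx) → EuclideanSpace ℝ (Fin dy) → EuclideanSpace ℝ (Fin dx))
    (g2 : EuclideanSpace ℝ (Fin dx) → EuclideanSpace ℝ (Fin dy) → EuclideanSpace ℝ (Fin dy))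
    (hg1 : ∀ x y, HasGradientAt (fun x' => g x' y) (g1 x y) x)
    (hg2 : ∀ x y, HasGradientAt (fun y' => g x y') (g2 x y) y)
    (hsmooth : ∀ x y x' y',
      ‖g1 x y - g1 x' y'‖ ^ 2 + ‖g2 x y - g2 x' y'‖ ^ 2 ≤ L ^ 2 * (‖x - x'‖ ^ 2 + ‖y - y'‖ ^ 2))
    (Φ : EuclideanSpace ℝ (Fin dx) → ℝ) (Φs : ℝ)
    (hΦ : ∀ x, IsGreatest (Set.range (g x)) (Φ x))
    (hYcl : ∀ x, IsClosed {y | g x y = Φ x})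
    (hΦs : IsGLB (Set.range Φ) Φs)
    (Ψ : EuclideanSpace ℝ (Fin dy) → ℝ)
    (hΨ : ∀ y, IsLeast (Set.range (fun x => g x y)) (Ψ y))
    (hPL1 : ∀ x y, 2 * μ1 * (g x y - Ψ y) ≤ ‖g1 x y‖ ^ 2)
    (hPL2 : ∀ x y, 2 * μ2 * (Φ x - g x y) ≤ ‖g2 x y‖ ^ 2) :
    ∀ x, 2 * μ1 * (Φ x - Φs) ≤ ‖gradient Φ x‖ ^ 2 := by
  intro x
  obtain ⟨y, hy⟩ := (hΦ x).1
  have hle : ∀ x' y', g x' y' ≤ Φ x' := fun x' y' => (hΦ x').2 ⟨y', rfl⟩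
  have hg2_zero : g2 x y = 0 := by
    have hmax : IsLocalMax (fun y' => g x y') y :=
      Filter.Eventually.of_forall fun y' => (hle x y').trans_eq hy.symm
    simpa using hmax.hasFDerivAt_eq_zero (hg2 x y).hasFDerivAt
  have hgap : ∀ x', |Φ x' - g x' y| ≤ L ^ 2 / (2 * μ2) * ‖x' - x‖ ^ 2 := by
    intro x'
    have hpl := hPL2 x' y
    have hlip := hsmooth x' y x y
    rw [hg2_zero, sub_zero, sub_self y, norm_zero] at hlip
    rw [abs_of_nonneg (sub_nonneg.2 (hle x' y)), div_mul_eq_mul_div, le_div_iff₀ (by positivity)]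
    nlinarith [sq_nonneg ‖g1 x' y - g1 x y‖]
  have hgrad : gradient Φ x = g1 x y := ((hg1 x y).of_abs_sub_le_sq _ hgap).gradient
  have hΨ_le : Ψ y ≤ Φs := by
    refine hΦs.2 ?_
    rintro _ ⟨x', rfl⟩
    exact ((hΨ y).2 ⟨x', rfl⟩).trans (hle x' y)
  rw [hgrad, ← hy]
  exact le_trans (by gcongr) (hPL1 x y)
end

section
/- Let g : ℝ^{d_x} × ℝ^{d_y} → ℝ with primal function Φ(x) := max_y g(x;y) well-defined, Y*_x := argmax_y g(x;y) nonempty and closed for each x, and Φ* := inf_x Φ(x) > −∞; fix λ > 0. Then: (i) a point (x*;y*) is a global minimax point of g (i.e., g(x*;y) ≤ g(x*;y*) ≤ Φ(x) for all x, y) if and only if V_λ(x*;y*) = 0, where V_λ(x;y) := λ(Φ(x) − Φ*) + (Φ(x) − g(x;y)); (ii) if g is L-smooth and −g(x;·) is μ₂-PL for every x, then every global minimax point of g is a stationary point (∇₁g = ∇₂g = 0 there); (iii) if moreover g(·;y) is μ₁-PL for every y and Φ attains its infimum, then every stationary point of g is a saddle point (g(x*;y) ≤ g(x*;y*) ≤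 g(x;y*) for all x, y), and g possesses a saddle point. -/
open Set

/-- If `f` plus a multiple of `‖x - a‖ ^ 2` is minimized at `a`, then the gradient of
`f` vanishes at `a`. -/
theorem HasGradientAt.eq_zero_of_forall_le_add_norm_sub_sq {E : Type*} [NormedAddCommGroup E]
    [InnerProductSpace ℝ E] [CompleteSpace E] {f : E → ℝ} {f' a : E} (hf : HasGradientAt f f' a)
    {C : ℝ} (h : ∀ x, f a ≤ f x + C * ‖x - a‖ ^ 2) : f' = 0 := by
  have hd := hf.hasFDerivAt.add ((((hasFDerivAt_id a).sub_const a).norm_sq).const_mul C)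
  have hmin : IsLocalMin (fun x => f x + C * ‖x - a‖ ^ 2) a :=
    Filter.Eventually.of_forall fun x => by simpa using h x
  have h0 := hmin.hasFDerivAt_eq_zero hd
  simpa using h0

/-- At a global minimax point of a function with Lipschitz partial gradients whose negative is PL
in the second variable, both partial gradients vanish. -/
theorem gradients_eq_zero_of_global_minimax {E F : Type*}
    [NormedAddCommGroup E] [InnerProductSpace ℝ E] [CompleteSpace E]
    [NormedAddCommGroup F] [InnerProductSpace ℝ F] [CompleteSpace F]
    {g : E → F → ℝ} {Φ : E → ℝ} {L μ : ℝ} {g1 : E → F → E} {g2 : E → F → F} (hμ : 0 < μ)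
    (hg1 : ∀ x y, HasGradientAt (fun x' => g x' y) (g1 x y) x)
    (hg2 : ∀ x y, HasGradientAt (fun y' => g x y') (g2 x y) y)
    (hL : ∀ x y x' y',
      ‖g1 x y - g1 x' y'‖ ^ 2 + ‖g2 x y - g2 x' y'‖ ^ 2
        ≤ L ^ 2 * (‖x - x'‖ ^ 2 + ‖y - y'‖ ^ 2))
    (hPL : ∀ x y, 2 * μ * (Φ x - g x y) ≤ ‖g2 x y‖ ^ 2)
    {xs : E} {ys : F} (hmax : ∀ y, g xs y ≤ g xs ys) (hmin : ∀ x, g xs ys ≤ Φ x) :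
    g1 xs ys = 0 ∧ g2 xs ys = 0 := by
  have h2 : g2 xs ys = 0 := by
    have hloc : IsLocalMax (fun y => g xs y) ys := Filter.Eventually.of_forall hmax
    simpa using hloc.hasFDerivAt_eq_zero (hg2 xs ys).hasFDerivAt
  refine ⟨(hg1 xs ys).eq_zero_of_forall_le_add_norm_sub_sq (C := L ^ 2 / (2 * μ))
    fun x => ?_, h2⟩
  have hlip := hL x ys xs ys
  rw [h2] at hlip
  simp only [sub_zero, sub_self, norm_zero, ne_eq, OfNat.ofNat_ne_zero, not_false_eq_true,
    zero_pow, add_zero] at hlip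
  have hgap : Φ x - g x ys ≤ L ^ 2 / (2 * μ) * ‖x - xs‖ ^ 2 := by
    rw [div_mul_eq_mul_div, le_div_iff₀ (by positivity)]
    nlinarith [hPL x ys, sq_nonneg ‖g1 x ys - g1 xs ys‖]
  linarith [hmin x]


/-- **Proposition (optimality notions).**
For `g : ℝ^{dx} × ℝ^{dy} → ℝ` with well-defined primal function `Φ`, nonempty closed argmax
sets, `Φ* = inf Φ > −∞` and `λ > 0`:
(i) `(x*;y*)` is a global minimax point iff `V_λ(x*;y*) = 0`;
(ii) if `g` is `L`-smooth and `−g(x;·)` is `μ₂`-PL for every `x`, every global minimax point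
is a stationary point;
(iii) if moreover `g(·;y)` is `μ₁`-PL for every `y` and `Φ` attains its infimum, every
stationary point is a saddle point, and `g` possesses a saddle point. -/
theorem minimax_potential_stationary_saddle
    (dx dy : ℕ)
    (g : EuclideanSpace ℝ (Fin dx) → EuclideanSpace ℝ (Fin dy) → ℝ)
    (Φ : EuclideanSpace ℝ (Fin dx) → ℝ) (Φs lam : ℝ)
    (hΦ : ∀ x, IsGreatest (Set.range (g x)) (Φ x))
    (hYcl : ∀ x, IsClosed {y | g x y = Φ x})
    (hΦs : IsGLB (Set.range Φ) Φs)
    (hlam : 0 < lam) :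
    -- (i) global minimax ↔ V_λ = 0
    (∀ xs ys,
      ((∀ y, g xs y ≤ g xs ys) ∧ (∀ x, g xs ys ≤ Φ x)) ↔
        lam * (Φ xs - Φs) + (Φ xs - g xs ys) = 0) ∧
    -- (ii) smooth nonconvex-PL: global minimax ⇒ stationary
    (∀ (L μ2 : ℝ)
      (g1 : EuclideanSpace ℝ (Fin dx) → EuclideanSpace ℝ (Fin dy) → EuclideanSpace ℝ (Fin dx))
      (g2 : EuclideanSpace ℝ (Fin dx) → EuclideanSpace ℝ (Fin dy) → EuclideanSpace ℝ (Fin dy)),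
      0 < L → 0 < μ2 →
      (∀ x y, HasGradientAt (fun x' => g x' y) (g1 x y) x) →
      (∀ x y, HasGradientAt (fun y' => g x y') (g2 x y) y) →
      (∀ x y x' y',
        ‖g1 x y - g1 x' y'‖ ^ 2 + ‖g2 x y - g2 x' y'‖ ^ 2
          ≤ L ^ 2 * (‖x - x'‖ ^ 2 + ‖y - y'‖ ^ 2)) →
      (∀ x y, 2 * μ2 * (Φ x - g x y) ≤ ‖g2 x y‖ ^ 2) →
      ∀ xs ys, (∀ y, g xs y ≤ g xs ys) → (∀ x, g xs ys ≤ Φ x) →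
        g1 xs ys = 0 ∧ g2 xs ys = 0) ∧
    -- (iii) smooth two-sided PL: stationary ⇒ saddle, and a saddle point exists
    (∀ (L μ1 μ2 : ℝ)
      (g1 : EuclideanSpace ℝ (Fin dx) → EuclideanSpace ℝ (Fin dy) → EuclideanSpace ℝ (Fin dx))
      (g2 : EuclideanSpace ℝ (Fin dx) → EuclideanSpace ℝ (Fin dy) → EuclideanSpace ℝ (Fin dy))
      (Ψ : EuclideanSpace ℝ (Fin dy) → ℝ),
      0 < L → 0 < μ1 → 0 < μ2 →
      (∀ x y, HasGradientAt (fun x' => g x' y) (g1 x y) x) →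
      (∀ x y, HasGradientAt (fun y' => g x y') (g2 x y) y) →
      (∀ x y x' y',
        ‖g1 x y - g1 x' y'‖ ^ 2 + ‖g2 x y - g2 x' y'‖ ^ 2
          ≤ L ^ 2 * (‖x - x'‖ ^ 2 + ‖y - y'‖ ^ 2)) →
      (∀ x y, 2 * μ2 * (Φ x - g x y) ≤ ‖g2 x y‖ ^ 2) →
      (∀ y, IsLeast (Set.range (fun x => g x y)) (Ψ y)) →
      (∀ x y, 2 * μ1 * (g x y - Ψ y) ≤ ‖g1 x y‖ ^ 2) →
      (∃ x, Φ x = Φs) →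
      ((∀ xs ys, g1 xs ys = 0 → g2 xs ys = 0 →
          (∀ y, g xs y ≤ g xs ys) ∧ (∀ x, g xs ys ≤ g x ys)) ∧
       (∃ xs ys, (∀ y, g xs y ≤ g xs ys) ∧ (∀ x, g xs ys ≤ g x ys)))) := by
  have hle : ∀ x y, g x y ≤ Φ x := fun x y => (hΦ x).2 (mem_range_self y)
  have hinf : ∀ x, Φs ≤ Φ x := fun x => hΦs.1 (mem_range_self x)
  refine ⟨fun xs ys => ⟨?_, fun h => ?_⟩, ?_, ?_⟩
  · rintro ⟨hmax, hmin⟩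
    obtain ⟨y, hy⟩ := (hΦ xs).1
    have hval : Φ xs = g xs ys := le_antisymm (hy ▸ hmax y) (hle xs ys)
    have hopt : Φ xs = Φs :=
      le_antisymm (hΦs.2 (forall_mem_range.2 fun x => hval ▸ hmin x)) (hinf xs)
    rw [← hval, hopt]
    ring
  · have hprod := mul_nonneg hlam.le (sub_nonneg.2 (hinf xs))
    have hval : Φ xs = g xs ys := by linarith [hle xs ys]
    have hopt : Φ xs - Φs = 0 := by
      have hzero : lam * (Φ xs - Φs) = 0 := by linarith
      exact (mul_eq_zero.1 hzero).resolve_left hlam.ne'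
    exact ⟨fun y => hval ▸ hle xs y, fun x => by linarith [hinf x]⟩
  · intro L μ2 g1 g2 _ hμ2 hg1 hg2 hL hPL xs ys hmax hmin
    exact gradients_eq_zero_of_global_minimax hμ2 hg1 hg2 hL hPL hmax hmin
  · intro L μ1 μ2 g1 g2 Ψ _ hμ1 hμ2 hg1 hg2 hL hPL2 hΨ hPL1 hatt
    have hsaddle : ∀ xs ys, g1 xs ys = 0 → g2 xs ys = 0 →
        (∀ y, g xs y ≤ g xs ys) ∧ (∀ x, g xs ys ≤ g x ys) := by
      intro xs ys h1 h2
      have hPL1' := hPL1 xs ys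
      have hPL2' := hPL2 xs ys
      simp only [h1, h2, norm_zero, ne_eq, OfNat.ofNat_ne_zero, not_false_eq_true,
        zero_pow] at hPL1' hPL2'
      have hx : g xs ys - Ψ ys ≤ 0 := nonpos_of_mul_nonpos_right hPL1' (by positivity)
      have hy : Φ xs - g xs ys ≤ 0 := nonpos_of_mul_nonpos_right hPL2' (by positivity)
      refine ⟨fun y => by linarith [hle xs y], fun x => ?_⟩
      have hΨx : Ψ ys ≤ g x ys := (hΨ ys).2 (mem_range_self x)
      linarith
    refine ⟨hsaddle, ?_⟩
    obtain ⟨xs, hxs⟩ := hatt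
    obtain ⟨ys, hys⟩ := (hΦ xs).1
    obtain ⟨h1, h2⟩ := gradients_eq_zero_of_global_minimax hμ2 hg1 hg2 hL hPL2
      (fun y => hys ▸ hle xs y) (fun x => (hys.trans hxs) ▸ hinf x)
    exact ⟨xs, ys, hsaddle xs ys h1 h2⟩
end

section
/- Let μ₁, μ₂, L > 0 with L ≥ max{μ₁, μ₂}, and let ℓ ∈ ℝ satisfy ℓ² ≤ L² − μ₁μ₂ − L|μ₁ − μ₂| (the right-hand side is nonnegative under the stated hypotheses). Define f : ℝ × ℝ → ℝ by f(x;y) = (μ₁/2)x² − (μ₂/2)y² + ℓxy. Then f is L-smooth (its gradient is L-Lipschitz, equivalently the spectral norm of the matrix [[μ₁, ℓ],[ℓ, −μ₂]] is at most L), f is μ₁-strongly convex in x for each fixed y, f is μ₂-strongly concave in y for each fixed x, and (0,0) is the unique saddle point of f. -/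
/-- A binary quadratic form with nonnegative diagonal and determinant is nonnegative. -/
theorem binary_quadratic_form_nonneg {a b c : ℝ} (ha : 0 ≤ a) (hc : 0 ≤ c) (hb : b ^ 2 ≤ a * c)
    (u v : ℝ) : 0 ≤ a * u ^ 2 + 2 * b * u * v + c * v ^ 2 := by
  rcases ha.eq_or_lt with rfl | ha
  · have hb0 : b = 0 := by nlinarith
    subst hb0
    nlinarith [mul_nonneg hc (sq_nonneg v)]
  · refine (mul_nonneg_iff_of_pos_left ha).1 ?_
    nlinarith [sq_nonneg (a * u + b * v), mul_nonneg (sub_nonneg.2 hb) (sq_nonneg v)]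

/-- The symmetric matrix `[[p, l], [l, -q]]` has spectral norm at most `L` under the stated bound
on its off-diagonal entry. -/
theorem saddle_matrix_sq_norm_le {L p q l : ℝ} (hp : 0 < p) (hq : 0 < q) (hpL : p ≤ L) (hqL : q ≤ L)
    (hl : l ^ 2 ≤ L ^ 2 - p * q - L * |p - q|) (u v : ℝ) :
    (p * u + l * v) ^ 2 + (l * u - q * v) ^ 2 ≤ L ^ 2 * (u ^ 2 + v ^ 2) := by
  have hL : 0 < L := hp.trans_le hpL
  have hminus : 0 ≤ (L - p) * (L + q) - l ^ 2 := by
    nlinarith [mul_le_mul_of_nonneg_left (le_abs_self (p - q)) hL.le]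
  have hplus : 0 ≤ (L + p) * (L - q) - l ^ 2 := by
    nlinarith [mul_le_mul_of_nonneg_left (neg_le_abs (p - q)) hL.le]
  have hdiag : 0 ≤ L ^ 2 - p ^ 2 - l ^ 2 ∧ 0 ≤ L ^ 2 - q ^ 2 - l ^ 2 := by
    rcases le_total p q with h | h
    · have := mul_nonneg (sub_nonneg.2 h) (sub_nonneg.2 hqL)
      constructor <;> nlinarith
    · have := mul_nonneg (sub_nonneg.2 h) (sub_nonneg.2 hpL)
      constructor <;> nlinarith
  have hform := binary_quadratic_form_nonneg (b := -(l * (p - q))) hdiag.1 hdiag.2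
    (by linarith [mul_nonneg hminus hplus]) u v
  linarith

/-- **Proposition (worst-case SC-SC quadratic).**
Let `μ₁, μ₂, L > 0` with `L ≥ max{μ₁, μ₂}` and `ℓ² ≤ L² − μ₁μ₂ − L|μ₁ − μ₂|` (the right-hand
side being nonnegative).  Then `f(x;y) = (μ₁/2)x² − (μ₂/2)y² + ℓxy` is `L`-smooth (its
gradient `(μ₁x + ℓy, ℓx − μ₂y)` is `L`-Lipschitz), `μ₁`-strongly convex in `x`,
`μ₂`-strongly concave in `y`, and `(0,0)` is its unique saddle point. -/
theorem scsc_quadratic_worst_case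
    (L μ1 μ2 ℓ : ℝ) (hL : 0 < L) (hμ1 : 0 < μ1) (hμ2 : 0 < μ2)
    (hLmax : max μ1 μ2 ≤ L)
    (hℓ : ℓ ^ 2 ≤ L ^ 2 - μ1 * μ2 - L * |μ1 - μ2|)
    (f : ℝ → ℝ → ℝ)
    (hf : ∀ x y, f x y = μ1 / 2 * x ^ 2 - μ2 / 2 * y ^ 2 + ℓ * x * y) :
    -- nonnegativity of the admissible range for ℓ²
    0 ≤ L ^ 2 - μ1 * μ2 - L * |μ1 - μ2| ∧
    -- partial derivatives
    (∀ x y, HasDerivAt (fun x' => f x' y) (μ1 * x + ℓ * y) x) ∧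
    (∀ x y, HasDerivAt (fun y' => f x y') (ℓ * x - μ2 * y) y) ∧
    -- L-smoothness: the (joint) gradient is L-Lipschitz
    (∀ x y x' y',
      (μ1 * x + ℓ * y - (μ1 * x' + ℓ * y')) ^ 2 + (ℓ * x - μ2 * y - (ℓ * x' - μ2 * y')) ^ 2
        ≤ L ^ 2 * ((x - x') ^ 2 + (y - y') ^ 2)) ∧
    -- μ₁-strong convexity in x for each fixed y
    (∀ y x x', f x y + (μ1 * x + ℓ * y) * (x' - x) + μ1 / 2 * (x' - x) ^ 2 ≤ f x' y) ∧
    -- μ₂-strong concavity in y for each fixed x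
    (∀ x y y', f x y' ≤ f x y + (ℓ * x - μ2 * y) * (y' - y) - μ2 / 2 * (y' - y) ^ 2) ∧
    -- (0,0) is a saddle point
    ((∀ y, f 0 y ≤ f 0 0) ∧ (∀ x, f 0 0 ≤ f x 0)) ∧
    -- uniqueness of the saddle point
    (∀ a b, (∀ y, f a y ≤ f a b) → (∀ x, f a b ≤ f x b) → a = 0 ∧ b = 0) := by
  have hf' : f = fun x y => μ1 / 2 * x ^ 2 - μ2 / 2 * y ^ 2 + ℓ * x * y := by
    ext x y
    exact hf x y
  subst hf'
  refine ⟨(sq_nonneg ℓ).trans hℓ, fun x y => ?_, fun x y => ?_, fun x y x' y' => ?_,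
    fun y x x' => ?_, fun x y y' => ?_, ⟨fun y => ?_, fun x => ?_⟩, fun a b hy hx => ?_⟩
  · have h := ((((hasDerivAt_id' x).pow 2).const_mul (μ1 / 2)).sub_const (μ2 / 2 * y ^ 2)).add
      (((hasDerivAt_id' x).const_mul ℓ).mul_const y)
    exact h.congr_deriv (by norm_num; ring)
  · have h := ((((hasDerivAt_id' y).pow 2).const_mul (μ2 / 2)).const_sub (μ1 / 2 * x ^ 2)).add
      ((hasDerivAt_id' y).const_mul (ℓ * x))
    exact h.congr_deriv (by norm_num; ring)
  · have h := saddle_matrix_sq_norm_le hμ1 hμ2 ((le_max_left _ _).trans hLmax)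
      ((le_max_right _ _).trans hLmax) hℓ (x - x') (y - y')
    linarith
  · exact le_of_eq (by ring)
  · exact le_of_eq (by ring)
  · nlinarith [sq_nonneg y]
  · nlinarith [sq_nonneg x]
  · have hy0 := hy 0
    have hx0 := hx 0
    dsimp only at hy0 hx0
    have ha : 0 ≤ μ1 * a ^ 2 := by positivity
    have hb : 0 ≤ μ2 * b ^ 2 := by positivity
    have ha0 : μ1 * a ^ 2 = 0 := by linarith
    have hb0 : μ2 * b ^ 2 = 0 := by linarith
    simpa [hμ1.ne', hμ2.ne'] using And.intro ha0 hb0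
end

section
/- Suppose every component f_i is L-smooth (Assumption 1). For any epoch k of mini-batch altSGDA-RR (for any realized permutation), define G_k := (1/q)∑_{t=1}^q ‖z_{t−1}^k − z₀^k‖², and epoch aggregates g^k := (1/q)∑_{t=1}^q (1/b)∑_{i∈B_t^k} ∇₁f_i(x_{t−1}^k; y_{t−1}^k) and h^k := (1/q)∑_{t=1}^q (1/b)∑_{i∈B_t^k} ∇₂f_i(x_t^k; y_{t−1}^k). Then ‖g^k − ∇₁f(z₀^k)‖² ≤ L²G_k and ‖h^k − ∇₂f(z₀^k)‖² ≤ L²G_k + L²qα²‖g^k‖². -/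
/-- `t` steps of one epoch of mini-batch alternating SGDA with permutation `σ`. -/
noncomputable def altEpoch {n : ℕ} {E F : Type*} [AddCommGroup E] [Module ℝ E]
    [AddCommGroup F] [Module ℝ F] (α β : ℝ) (b : ℕ)
    (g1 : Fin n → E → F → E) (g2 : Fin n → E → F → F)
    (σ : Equiv.Perm (Fin n)) : ℕ → E × F → E × F
  | 0, z => z
  | t + 1, z =>
    let w := altEpoch α β b g1 g2 σ t z
    let x' := w.1 - α • batchAvg b g1 σ t w.1 w.2
    (x', w.2 + β • batchAvg b g2 σ t x' w.2)

/-- The mini-batches of an epoch partition the index set, so that a double sum over batches and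
their members is a single sum over all indices. -/
lemma sum_batches_eq_sum {V : Type*} [AddCommMonoid V] {n b q : ℕ} (hq : n = b * q)
    (F : ℕ → Fin n → V) :
    ∑ t ∈ Finset.range q, ∑ j ∈ Finset.univ.filter
      (fun j : Fin n => b * t ≤ (j : ℕ) ∧ (j : ℕ) < b * (t + 1)), F t j
      = ∑ j : Fin n, F ((j : ℕ) / b) j := by
  have hmem (j : Fin n) : (j : ℕ) / b ∈ Finset.range q :=
    Finset.mem_range.2 (Nat.div_lt_of_lt_mul (hq ▸ j.2))
  rw [← Finset.sum_fiberwise_of_maps_to (s := Finset.univ) (fun j _ => hmem j)]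
  refine Finset.sum_congr rfl fun t _ => ?_
  have hset : Finset.univ.filter (fun j : Fin n => b * t ≤ (j : ℕ) ∧ (j : ℕ) < b * (t + 1))
      = Finset.univ.filter (fun j : Fin n => (j : ℕ) / b = t) := by
    ext j
    have hb : 0 < b := by
      rcases Nat.eq_zero_or_pos b with rfl | hb
      · exact absurd j.2 (by simp [hq])
      · exact hb
    simp only [Finset.mem_filter, Finset.mem_univ, true_and]
    rw [Nat.div_eq_iff hb, mul_comm b t, mul_comm b (t + 1), add_mul, one_mul]
    omega
  rw [hset]
  refine Finset.sum_congr rfl fun j hj => ?_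
  rw [(Finset.mem_filter.1 hj).2]

/-- Every mini-batch has `b` elements. -/
lemma card_batch {n b q t : ℕ} (hq : n = b * q) (ht : t < q) :
    (Finset.univ.filter
      (fun j : Fin n => b * t ≤ (j : ℕ) ∧ (j : ℕ) < b * (t + 1))).card = b := by
  have hle : b * (t + 1) ≤ n := hq ▸ Nat.mul_le_mul_left b ht
  have hmap : (Finset.univ.filter
      (fun j : Fin n => b * t ≤ (j : ℕ) ∧ (j : ℕ) < b * (t + 1))).map Fin.valEmbedding
      = Finset.Ico (b * t) (b * (t + 1)) := by
    ext m
    simp only [Finset.mem_map, Finset.mem_filter, Finset.mem_univ, true_and,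
      Fin.valEmbedding_apply, Finset.mem_Ico]
    exact ⟨by rintro ⟨j, hj, rfl⟩; exact hj, fun hm => ⟨⟨m, hm.2.trans_le hle⟩, hm, rfl⟩⟩
  rw [← Finset.card_map Fin.valEmbedding, hmap, Nat.card_Ico, mul_add, mul_one,
    Nat.add_sub_cancel_left]

/-- The squared norm of an average is at most the average of the squared norms. -/
lemma norm_average_sq_le {V : Type*} [SeminormedAddCommGroup V] [NormedSpace ℝ V] {n : ℕ}
    (a : Fin n → V) : ‖(n : ℝ)⁻¹ • ∑ i, a i‖ ^ 2 ≤ (n : ℝ)⁻¹ * ∑ i, ‖a i‖ ^ 2 := by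
  rcases Nat.eq_zero_or_pos n with rfl | hn
  · simp
  have hn' : (0 : ℝ) < n := by exact_mod_cast hn
  have hsq : ‖∑ i, a i‖ ^ 2 ≤ n * ∑ i, ‖a i‖ ^ 2 := by
    calc ‖∑ i, a i‖ ^ 2 ≤ (∑ i, ‖a i‖) ^ 2 := by gcongr; exact norm_sum_le _ _
      _ ≤ n * ∑ i, ‖a i‖ ^ 2 := by
        simpa using sq_sum_le_card_mul_sum_sq (s := Finset.univ) (f := fun i => ‖a i‖)
  rw [norm_smul, mul_pow, norm_inv, Real.norm_natCast]
  calc ((n : ℝ)⁻¹) ^ 2 * ‖∑ i, a i‖ ^ 2 ≤ ((n : ℝ)⁻¹) ^ 2 * (n * ∑ i, ‖a i‖ ^ 2) := by gcongr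
    _ = (n : ℝ)⁻¹ * ∑ i, ‖a i‖ ^ 2 := by field_simp

/-- If all components of `g` are `L`-Lipschitz, then the epoch average of the mini-batch values of
`g` along points `(u t, v t)` deviates from the full average at `(x0, y0)` by at most `L` times the
root mean square distance of these points from `(x0, y0)`. -/
lemma norm_epochAvg_sub_average_sq_le {E F V : Type*} [SeminormedAddCommGroup E]
    [SeminormedAddCommGroup F] [SeminormedAddCommGroup V] [NormedSpace ℝ V]
    {n b q : ℕ} (hb : 0 < b) (hq : n = b * q) {L : ℝ} {g : Fin n → E → F → V}
    (hg : ∀ i x y x' y', ‖g i x y - g i x' y'‖ ^ 2 ≤ L ^ 2 * (‖x - x'‖ ^ 2 + ‖y - y'‖ ^ 2))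
    (σ : Equiv.Perm (Fin n)) (u : ℕ → E) (v : ℕ → F) (x0 : E) (y0 : F) :
    ‖(q : ℝ)⁻¹ • ∑ t ∈ Finset.range q, batchAvg b g σ t (u t) (v t)
        - (n : ℝ)⁻¹ • ∑ i, g i x0 y0‖ ^ 2
      ≤ L ^ 2 * ((q : ℝ)⁻¹ * ∑ t ∈ Finset.range q, (‖u t - x0‖ ^ 2 + ‖v t - y0‖ ^ 2)) := by
  have hb' : (b : ℝ) ≠ 0 := by exact_mod_cast hb.ne'
  have hinv : (n : ℝ)⁻¹ = (q : ℝ)⁻¹ * (b : ℝ)⁻¹ := by rw [hq, Nat.cast_mul, mul_inv, mul_comm]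
  have havg : (q : ℝ)⁻¹ • ∑ t ∈ Finset.range q, batchAvg b g σ t (u t) (v t)
      = (n : ℝ)⁻¹ • ∑ j : Fin n, g (σ j) (u ((j : ℕ) / b)) (v ((j : ℕ) / b)) := by
    rw [← sum_batches_eq_sum hq fun t j => g (σ j) (u t) (v t)]
    simp only [batchAvg, ← Finset.smul_sum, smul_smul, hinv]
  have hdist : ∑ j : Fin n, (‖u ((j : ℕ) / b) - x0‖ ^ 2 + ‖v ((j : ℕ) / b) - y0‖ ^ 2)
      = b * ∑ t ∈ Finset.range q, (‖u t - x0‖ ^ 2 + ‖v t - y0‖ ^ 2) := by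
    rw [← sum_batches_eq_sum hq fun t _ => ‖u t - x0‖ ^ 2 + ‖v t - y0‖ ^ 2, Finset.mul_sum]
    refine Finset.sum_congr rfl fun t ht => ?_
    rw [Finset.sum_const, card_batch hq (Finset.mem_range.1 ht), nsmul_eq_mul]
  rw [havg, ← Equiv.sum_comp σ fun i => g i x0 y0, ← smul_sub, ← Finset.sum_sub_distrib]
  calc _ ≤ (n : ℝ)⁻¹ * ∑ j : Fin n,
        ‖g (σ j) (u ((j : ℕ) / b)) (v ((j : ℕ) / b)) - g (σ j) x0 y0‖ ^ 2 :=
        norm_average_sq_le _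
    _ ≤ (n : ℝ)⁻¹ * ∑ j : Fin n,
        L ^ 2 * (‖u ((j : ℕ) / b) - x0‖ ^ 2 + ‖v ((j : ℕ) / b) - y0‖ ^ 2) := by
        gcongr
        exact hg _ _ _ _ _
    _ = _ := by
        rw [← Finset.mul_sum, hdist, hinv]
        field_simp

/-- The displacement of the first component along an epoch is the accumulated descent step. -/
lemma altEpoch_fst_sub {n : ℕ} {E F : Type*} [AddCommGroup E] [Module ℝ E]
    [AddCommGroup F] [Module ℝ F] (α β : ℝ) (b : ℕ) (g1 : Fin n → E → F → E)
    (g2 : Fin n → E → F → F) (σ : Equiv.Perm (Fin n)) (z : E × F) (m : ℕ) :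
    (altEpoch α β b g1 g2 σ m z).1 - z.1
      = -(α • ∑ t ∈ Finset.range m, batchAvg b g1 σ t (altEpoch α β b g1 g2 σ t z).1
          (altEpoch α β b g1 g2 σ t z).2) := by
  induction m with
  | zero => simp [altEpoch]
  | succ m ih =>
    rw [Finset.sum_range_succ, smul_add, neg_add, ← ih]
    simp only [altEpoch]
    abel

/-- **Lemma (epoch-aggregate noise bound for altSGDA-RR).**
Suppose every component `f_i` is `L`-smooth.  For any epoch of mini-batch altSGDA-RR with any
realized permutation, with `G_k = (1/q)∑_{t=1}^q ‖z_{t−1} − z₀‖²` and the epoch aggregates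
`g^k = (1/q)∑_t (1/b)∑_{i∈B_t} ∇₁f_i(x_{t−1};y_{t−1})`,
`h^k = (1/q)∑_t (1/b)∑_{i∈B_t} ∇₂f_i(x_t;y_{t−1})`, one has
`‖g^k − ∇₁f(z₀)‖² ≤ L²G_k` and `‖h^k − ∇₂f(z₀)‖² ≤ L²G_k + L²qα²‖g^k‖²`. -/
theorem alt_epoch_aggregate_noise_bound
    (dx dy n b q : ℕ) (hn : 1 ≤ n) (hb : 0 < b) (hq : n = b * q)
    (L : ℝ) (hL : 0 < L)
    (f : Fin n → EuclideanSpace ℝ (Fin dx) → EuclideanSpace ℝ (Fin dy) → ℝ)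
    (g1 : Fin n → EuclideanSpace ℝ (Fin dx) → EuclideanSpace ℝ (Fin dy) → EuclideanSpace ℝ (Fin dx))
    (g2 : Fin n → EuclideanSpace ℝ (Fin dx) → EuclideanSpace ℝ (Fin dy) → EuclideanSpace ℝ (Fin dy))
    (hg1 : ∀ i x y, HasGradientAt (fun x' => f i x' y) (g1 i x y) x)
    (hg2 : ∀ i x y, HasGradientAt (fun y' => f i x y') (g2 i x y) y)
    (hsmooth : ∀ i x y x' y',
      ‖g1 i x y - g1 i x' y'‖ ^ 2 + ‖g2 i x y - g2 i x' y'‖ ^ 2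
        ≤ L ^ 2 * (‖x - x'‖ ^ 2 + ‖y - y'‖ ^ 2))
    (G1 : EuclideanSpace ℝ (Fin dx) → EuclideanSpace ℝ (Fin dy) → EuclideanSpace ℝ (Fin dx))
    (G2 : EuclideanSpace ℝ (Fin dx) → EuclideanSpace ℝ (Fin dy) → EuclideanSpace ℝ (Fin dy))
    (hG1 : ∀ x y, G1 x y = (n : ℝ)⁻¹ • ∑ i, g1 i x y)
    (hG2 : ∀ x y, G2 x y = (n : ℝ)⁻¹ • ∑ i, g2 i x y)
    (α β : ℝ) (σ : Equiv.Perm (Fin n))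
    (x0 : EuclideanSpace ℝ (Fin dx)) (y0 : EuclideanSpace ℝ (Fin dy))
    (gk : EuclideanSpace ℝ (Fin dx)) (hk : EuclideanSpace ℝ (Fin dy)) (Gk : ℝ)
    (hgk : gk = (q : ℝ)⁻¹ • ∑ t ∈ Finset.range q,
      batchAvg b g1 σ t (altEpoch α β b g1 g2 σ t (x0, y0)).1 (altEpoch α β b g1 g2 σ t (x0, y0)).2)
    (hhk : hk = (q : ℝ)⁻¹ • ∑ t ∈ Finset.range q,
      batchAvg b g2 σ t (altEpoch α β b g1 g2 σ (t + 1) (x0, y0)).1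
        (altEpoch α β b g1 g2 σ t (x0, y0)).2)
    (hGk : Gk = (q : ℝ)⁻¹ * ∑ t ∈ Finset.range q,
      (‖(altEpoch α β b g1 g2 σ t (x0, y0)).1 - x0‖ ^ 2 +
        ‖(altEpoch α β b g1 g2 σ t (x0, y0)).2 - y0‖ ^ 2)) :
    ‖gk - G1 x0 y0‖ ^ 2 ≤ L ^ 2 * Gk ∧
    ‖hk - G2 x0 y0‖ ^ 2 ≤ L ^ 2 * Gk + L ^ 2 * q * α ^ 2 * ‖gk‖ ^ 2 := by
  have hq0 : (q : ℝ) ≠ 0 := by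
    rintro h
    rw [Nat.cast_eq_zero] at h
    simp [hq, h] at hn
  set z := fun t => altEpoch α β b g1 g2 σ t (x0, y0) with hz
  constructor
  · rw [hgk, hG1, hGk]
    exact norm_epochAvg_sub_average_sq_le hb hq
      (fun i x y x' y' => (le_add_of_nonneg_right (sq_nonneg _)).trans (hsmooth i x y x' y'))
      σ (fun t => (z t).1) (fun t => (z t).2) x0 y0
  · have hbound := norm_epochAvg_sub_average_sq_le hb hq
      (fun i x y x' y' => (le_add_of_nonneg_left (sq_nonneg _)).trans (hsmooth i x y x' y'))
      σ (fun t => (z (t + 1)).1) (fun t => (z t).2) x0 y0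
    rw [hhk, hG2]
    refine hbound.trans_eq ?_
    have hlast : ‖(z q).1 - x0‖ ^ 2 = α ^ 2 * (q : ℝ) ^ 2 * ‖gk‖ ^ 2 := by
      have hdisp : (z q).1 - x0 = -(α • (q : ℝ) • gk) := by
        rw [hgk, smul_inv_smul₀ hq0]
        exact altEpoch_fst_sub α β b g1 g2 σ (x0, y0) q
      rw [hdisp, norm_neg, norm_smul, norm_smul, mul_pow, mul_pow, Real.norm_eq_abs, sq_abs,
        Real.norm_natCast, mul_assoc]
    have hshift : ∑ t ∈ Finset.range q, ‖(z (t + 1)).1 - x0‖ ^ 2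
        = ∑ t ∈ Finset.range q, ‖(z t).1 - x0‖ ^ 2 + ‖(z q).1 - x0‖ ^ 2 := by
      rw [← Finset.sum_range_succ (fun t => ‖(z t).1 - x0‖ ^ 2), Finset.sum_range_succ']
      simp [hz, altEpoch]
    have hGk' : Gk = (q : ℝ)⁻¹ *
        (∑ t ∈ Finset.range q, ‖(z t).1 - x0‖ ^ 2 + ∑ t ∈ Finset.range q, ‖(z t).2 - y0‖ ^ 2) := by
      rw [hGk, Finset.sum_add_distrib]
    rw [Finset.sum_add_distrib, hshift, hlast, hGk']
    field_simp
    ring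
end
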